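/- arXiv:2005.10920 — 4 statements merged into one kernel-verified Lean document; each statement's English description precedes it below -/
import Mathlib

section
/- Let k be a field, let G be a finite subgroup of PGL_2(k), and let a, b ∈ ℙ¹(k) be two points which do not lie in the same orbit under the action of G on ℙ¹(k). Let h ∈ k(x) be the rational function h(x) = ∏_{σ∈G} (x−σ(a))/(x−σ(b)), with the convention that the factor x−c equals the constant 1 whenever c = ∞. Then the field extension k(x)/k(h) is a Galois extension of degree #G whose Galois group is isomorphic to G. -/
open Polynomial OnePoint

/-- The projective general linear group `PGL₂(k)`, acting on `ℙ¹(k) = k ∪ {∞}`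
by homographies. -/
abbrev PGL2 (k : Type*) [Field k] : Type _ :=
  Matrix.GeneralLinearGroup (Fin 2) k ⧸ Subgroup.center (Matrix.GeneralLinearGroup (Fin 2) k)

open Classical in
/-- Möbius transformation of `ℙ¹(k) = k ∪ {∞}` associated to a 2×2 matrix
`M = !![a, b; c, d]`, sending `z` to `(a * z + b) / (c * z + d)`. -/
noncomputable def Matrix.mobius {k : Type*} [Field k] (M : Matrix (Fin 2) (Fin 2) k) :
    OnePoint k → OnePoint k := fun z =>
  Option.elim z
    (if M 1 0 = 0 then ∞ else ((M 0 0 / M 1 0 : k) : OnePoint k))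
    (fun w => if M 1 0 * w + M 1 1 = 0 then ∞
      else (((M 0 0 * w + M 0 1) / (M 1 0 * w + M 1 1) : k) : OnePoint k))

/-- The action of an element of `PGL₂(k)` on `ℙ¹(k)`, via a representative matrix
(the Möbius transformation does not depend on the chosen representative). -/
noncomputable def PGL2.act {k : Type*} [Field k] (g : PGL2 k) : OnePoint k → OnePoint k :=
  Matrix.mobius ((Quotient.out g : Matrix.GeneralLinearGroup (Fin 2) k) : Matrix (Fin 2) (Fin 2) k)

/-- `a` and `b` lie in the same orbit under the subgroup `G` of `PGL₂(k)`. -/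
def PGL2.SameOrbit {k : Type*} [Field k] (G : Subgroup (PGL2 k)) (a b : OnePoint k) : Prop :=
  ∃ σ ∈ G, PGL2.act σ a = b

/-- The factor `x - c` in `k(x)`, with the convention that it is the constant `1`
when `c = ∞`. -/
noncomputable def OnePoint.ratFactor {k : Type*} [Field k] (c : OnePoint k) : RatFunc k :=
  Option.elim c 1 (fun c₀ => RatFunc.X - RatFunc.C c₀)

/-!
The group `PGL₂(k)` acts on `k(x)` by `σ • f = f ∘ σ⁻¹`, faithfully and `k`-linearly. In
homogeneous terms a matrix `g` turns the linear form vanishing at `[v₀ : v₁]` into the one vanishing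
at `g [v₀ : v₁]`, up to a denominator which does not depend on `v`; hence `σ • (x - a) / (x - b)` is
a constant multiple of `(x - σ a) / (x - σ b)`. So `h` is, up to a constant, the norm
`∏ σ, σ • (x - a) / (x - b)`, and `k(h) ⊆ k(x)^G`. The numerator and the denominator of `h` are
coprime because the orbits of `a` and `b` are disjoint, and since `∞` lies in at most one of these
orbits, one of the two has degree `#G`. Therefore `[k(x) : k(h)] = #G = [k(x) : k(x)^G]` by Artin's
theorem, and `k(h) = k(x)^G`.
-/

section Artin

variable {K L G : Type*} [Field K] [Field L] [Algebra K L] [Group G] [Finite G]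
  [MulSemiringAction G L] [FaithfulSMul G L] [SMulCommClass G K L]

theorem isGaloisGroup_of_finrank_eq_card {E : IntermediateField K L}
    (hE : E ≤ FixedPoints.intermediateField G) (hcard : Module.finrank E L = Nat.card G) :
    IsGaloisGroup G E L := by
  have : Module.Finite E L := Module.finite_of_finrank_pos (hcard ▸ Nat.card_pos)
  have artin : Nat.card G = Module.finrank (FixedPoints.subfield G L) L :=
    IsGaloisGroup.card_eq_finrank G (FixedPoints.subfield G L) L
  rw [IntermediateField.eq_of_le_of_finrank_eq' hE (hcard.trans artin)]
  exact inferInstanceAs (IsGaloisGroup G (FixedPoints.subfield G L) L)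

end Artin

section Degree

open IntermediateField

variable {k : Type*} [Field k]

theorem finrank_adjoin_div_of_isCoprime {p q : k[X]} (hpq : IsCoprime p q) (hq : q ≠ 0) :
    Module.finrank k⟮algebraMap k[X] (RatFunc k) p / algebraMap k[X] (RatFunc k) q⟯ (RatFunc k) =
      max p.natDegree q.natDegree := by
  set f := algebraMap k[X] (RatFunc k) p / algebraMap k[X] (RatFunc k) q with hf
  have hcross : f.num * q = p * f.denom := (RatFunc.num_mul_eq_mul_denom_iff hq).mpr hf
  have hnum : Associated f.num p := associated_of_dvd_dvd
    (f.isCoprime_num_denom.dvd_of_dvd_mul_right (hcross ▸ dvd_mul_right _ _))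
    (hpq.dvd_of_dvd_mul_right (hcross ▸ dvd_mul_right _ _))
  have hdenom : Associated f.denom q := associated_of_dvd_dvd
    (f.isCoprime_num_denom.symm.dvd_of_dvd_mul_left (hcross ▸ dvd_mul_left _ _))
    (hpq.symm.dvd_of_dvd_mul_left (hcross ▸ dvd_mul_left _ _))
  rw [RatFunc.finrank_eq_max_natDegree,
    natDegree_eq_of_degree_eq (degree_eq_degree_of_associated hnum),
    natDegree_eq_of_degree_eq (degree_eq_degree_of_associated hdenom)]

theorem ratFactor_infty : (∞ : OnePoint k).ratFactor = 1 := rfl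

theorem ratFactor_coe (c : k) : (c : OnePoint k).ratFactor = RatFunc.X - RatFunc.C c := rfl

/-- The factor `x - c` as a polynomial, equal to `1` when `c = ∞`: the polynomial counterpart of
`OnePoint.ratFactor`, for which degree and coprimality make sense. -/
noncomputable def polyFactor (c : OnePoint k) : k[X] :=
  c.elim 1 fun c₀ => X - C c₀

theorem algebraMap_polyFactor (c : OnePoint k) :
    algebraMap k[X] (RatFunc k) (polyFactor c) = c.ratFactor := by
  cases c <;> simp [polyFactor, ratFactor_infty, ratFactor_coe]

theorem polyFactor_monic (c : OnePoint k) : (polyFactor c).Monic := by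
  cases c with
  | infty => exact monic_one
  | coe c => exact monic_X_sub_C c

theorem isCoprime_polyFactor {c d : OnePoint k} (h : c ≠ d) :
    IsCoprime (polyFactor c) (polyFactor d) := by
  cases c with
  | infty => exact isCoprime_one_left
  | coe c =>
    cases d with
    | infty => exact isCoprime_one_right
    | coe d =>
      exact isCoprime_X_sub_C_of_isUnit_sub (sub_ne_zero.mpr (mt (congrArg _) h)).isUnit

open Classical in
theorem natDegree_polyFactor (c : OnePoint k) :
    (polyFactor c).natDegree = if c ≠ ∞ then 1 else 0 := by
  cases c <;> simp [polyFactor]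

variable {ι : Type*} [Fintype ι]

open Classical in
theorem natDegree_prod_polyFactor (f : ι → OnePoint k) :
    (∏ i, polyFactor (f i)).natDegree = Finset.card {i | f i ≠ ∞} := by
  rw [natDegree_prod_of_monic _ _ fun i _ => polyFactor_monic (f i), Finset.card_filter]
  exact Finset.sum_congr rfl fun i _ => natDegree_polyFactor (f i)

theorem max_natDegree_prod_polyFactor {f g : ι → OnePoint k} (hfg : ∀ i j, f i ≠ g j) :
    max (∏ i, polyFactor (f i)).natDegree (∏ i, polyFactor (g i)).natDegree = Fintype.card ι := by
  classical
  simp only [natDegree_prod_polyFactor]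
  by_cases hf : ∀ i, f i ≠ ∞
  · rw [Finset.filter_true_of_mem fun i _ => hf i]
    exact max_eq_left (Finset.card_le_univ _)
  · obtain ⟨i, hi⟩ := not_forall_not.mp hf
    have hg (j : ι) : g j ≠ ∞ := fun hj => hfg i j (hi.trans hj.symm)
    rw [Finset.filter_true_of_mem fun j _ => hg j]
    exact max_eq_right (Finset.card_le_univ _)

theorem finrank_adjoin_prod_ratFactor_div {f g : ι → OnePoint k} (hfg : ∀ i j, f i ≠ g j) :
    Module.finrank k⟮∏ i, (f i).ratFactor / (g i).ratFactor⟯ (RatFunc k) = Fintype.card ι := by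
  have hcop : IsCoprime (∏ i, polyFactor (f i)) (∏ i, polyFactor (g i)) :=
    IsCoprime.prod_left fun i _ => IsCoprime.prod_right fun j _ => isCoprime_polyFactor (hfg i j)
  have hne : ∏ i, polyFactor (g i) ≠ 0 :=
    Finset.prod_ne_zero_iff.mpr fun i _ => (polyFactor_monic (g i)).ne_zero
  have hprod : ∏ i, (f i).ratFactor / (g i).ratFactor =
      algebraMap k[X] (RatFunc k) (∏ i, polyFactor (f i)) /
        algebraMap k[X] (RatFunc k) (∏ i, polyFactor (g i)) := by
    simp only [map_prod, algebraMap_polyFactor, Finset.prod_div_distrib]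
  rw [hprod, finrank_adjoin_div_of_isCoprime hcop hne, max_natDegree_prod_polyFactor hfg]

end Degree

section LinearForm

variable {k : Type*} [Field k]

theorem ratFunc_quadratic_eq_zero {p q r : k}
    (h : RatFunc.C p * RatFunc.X ^ 2 + RatFunc.C q * RatFunc.X + RatFunc.C r = 0) :
    p = 0 ∧ q = 0 ∧ r = 0 := by
  have hpoly : C p * X ^ 2 + C q * X + C r = 0 :=
    RatFunc.algebraMap_injective k (by simpa using h)
  have hcoeff (n : ℕ) := congrArg (coeff · n) hpoly
  exact ⟨by simpa [coeff_X, coeff_C] using hcoeff 2,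
    by simpa [coeff_X_pow, coeff_C] using hcoeff 1, by simpa using hcoeff 0⟩

/-- The dehomogenised linear form `v₁ x - v₀` on `ℙ¹(k)`, which vanishes at the point `[v₀ : v₁]`.
The point `∞ = [1 : 0]` corresponds to a nonzero constant. -/
noncomputable def linForm : (Fin 2 → k) →ₗ[k] RatFunc k :=
  (LinearMap.proj 1).smulRight RatFunc.X - (LinearMap.proj 0).smulRight 1

theorem linForm_apply (v : Fin 2 → k) :
    linForm v = RatFunc.C (v 1) * RatFunc.X - RatFunc.C (v 0) := by
  simp [linForm, RatFunc.smul_eq_C_mul]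

theorem linForm_injective : Function.Injective (linForm : (Fin 2 → k) →ₗ[k] RatFunc k) := by
  refine (injective_iff_map_eq_zero _).mpr fun v hv => ?_
  obtain ⟨-, h₁, h₀⟩ := ratFunc_quadratic_eq_zero (p := 0) (q := v 1) (r := -v 0) (by
    simpa [linForm_apply, sub_eq_add_neg] using hv)
  ext i
  fin_cases i
  · exact neg_eq_zero.mp h₀
  · exact h₁

theorem linForm_ne_zero {v : Fin 2 → k} (hv : v ≠ 0) : linForm v ≠ 0 :=
  (map_ne_zero_iff _ linForm_injective).mpr hv

theorem exists_linForm_eq_smul_ratFactor [DecidableEq k] {v : Fin 2 → k} (hv : v ≠ 0) :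
    ∃ u : kˣ, linForm v = u • ((equivProjectivization k).symm (.mk k v hv)).ratFactor := by
  rw [equivProjectivization_symm_apply_mk, linForm_apply]
  split_ifs with h₁
  · have h₀ : v 0 ≠ 0 := fun h₀ => hv (by ext i; fin_cases i <;> assumption)
    refine ⟨-Units.mk0 _ h₀, ?_⟩
    rw [ratFactor_infty, Units.smul_def, RatFunc.smul_eq_C_mul]
    simp [h₁]
  · refine ⟨Units.mk0 _ h₁, ?_⟩
    rw [ratFactor_coe, Units.smul_def, RatFunc.smul_eq_C_mul, Units.val_mk0, mul_sub,
      ← map_mul, mul_inv_cancel_left₀ h₁]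

/-- Homogeneous coordinates of a point of `ℙ¹(k)`. The sign at `∞` is the one for which
`linForm_homogCoord` holds. -/
def homogCoord (c : OnePoint k) : Fin 2 → k :=
  c.elim ![-1, 0] fun c₀ => ![c₀, 1]

theorem homogCoord_ne_zero (c : OnePoint k) : homogCoord c ≠ 0 := by
  cases c <;> simp [homogCoord]

theorem linForm_homogCoord (c : OnePoint k) : linForm (homogCoord c) = c.ratFactor := by
  cases c <;> simp [homogCoord, linForm_apply, ratFactor_infty, ratFactor_coe]

theorem equivProjectivization_eq_mk_homogCoord [DecidableEq k] (c : OnePoint k) :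
    equivProjectivization k c = .mk k (homogCoord c) (homogCoord_ne_zero c) := by
  rw [← Equiv.eq_symm_apply]
  cases c <;> simp [homogCoord]

end LinearForm

section Substitution

open scoped MatrixGroups

variable {k : Type*} [Field k]

theorem ratFunc_algHom_ext {A : Type*} [Semiring A] [Algebra k A] {φ ψ : RatFunc k →ₐ[k] A}
    (h : φ RatFunc.X = ψ RatFunc.X) : φ = ψ :=
  IsLocalization.algHom_ext (nonZeroDivisors k[X]) <| Polynomial.algHom_ext <| by
    change φ (algebraMap k[X] (RatFunc k) X) = ψ (algebraMap k[X] (RatFunc k) X)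
    rwa [RatFunc.algebraMap_X]

/-- The denominator, up to sign, of the homography `g⁻¹`; it vanishes at `g(∞)`. -/
noncomputable def mobiusDenom (g : GL (Fin 2) k) : RatFunc k :=
  linForm (g • ![1, 0])

/-- The homography `g⁻¹` as an element of `k(x)`; it vanishes at `g(0)`. -/
noncomputable def mobiusInv (g : GL (Fin 2) k) : RatFunc k :=
  -linForm (g • ![0, 1]) / mobiusDenom g

theorem mobiusDenom_ne_zero (g : GL (Fin 2) k) : mobiusDenom g ≠ 0 :=
  linForm_ne_zero <| (smul_ne_zero_iff_ne g).mpr <| by simp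

theorem linForm_smul (g : GL (Fin 2) k) (v : Fin 2 → k) :
    linForm (g • v) = (RatFunc.C (v 0) - RatFunc.C (v 1) * mobiusInv g) * mobiusDenom g := by
  have hv : g • v = v 0 • g • ![1, 0] + v 1 • g • ![0, 1] := by
    ext i
    fin_cases i <;> simp [mul_comm]
  rw [sub_mul, mul_assoc, mobiusInv, div_mul_cancel₀ _ (mobiusDenom_ne_zero g), hv, map_add,
    LinearMap.map_smul, LinearMap.map_smul, mobiusDenom, RatFunc.smul_eq_C_mul,
    RatFunc.smul_eq_C_mul, mul_neg, sub_neg_eq_add]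

theorem transcendental_mobiusInv (g : GL (Fin 2) k) : Transcendental k (mobiusInv g) := by
  refine RatFunc.transcendental_of_ne_C _ ?_
  rintro ⟨c, hc⟩
  have hzero : linForm (g • ![c, 1]) = 0 := by
    rw [linForm_smul, hc]
    simp
  exact linForm_ne_zero ((smul_ne_zero_iff_ne g).mpr (by simp)) hzero

/-- The substitution `f ↦ f ∘ g⁻¹` on `k(x)`, the inverse making it multiplicative in `g`. -/
noncomputable def mobiusSubst (g : GL (Fin 2) k) : RatFunc k →ₐ[k] RatFunc k :=
  (IntermediateField.val _).comp
    (RatFunc.algEquivOfTranscendental _ (transcendental_mobiusInv g)).toAlgHom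

theorem mobiusSubst_X (g : GL (Fin 2) k) : mobiusSubst g RatFunc.X = mobiusInv g := by
  simp [mobiusSubst]

theorem mobiusSubst_linForm (g : GL (Fin 2) k) (v : Fin 2 → k) :
    mobiusSubst g (linForm v) = -linForm (g • v) / mobiusDenom g := by
  have hC (c : k) : mobiusSubst g (RatFunc.C c) = RatFunc.C c := (mobiusSubst g).commutes c
  rw [eq_div_iff (mobiusDenom_ne_zero g), linForm_smul, linForm_apply, map_sub, map_mul, hC, hC,
    mobiusSubst_X, ← neg_mul, neg_sub]

theorem mobiusSubst_linForm_div (g : GL (Fin 2) k) (v w : Fin 2 → k) :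
    mobiusSubst g (linForm v / linForm w) = linForm (g • v) / linForm (g • w) := by
  rw [map_div₀, mobiusSubst_linForm, mobiusSubst_linForm,
    div_div_div_cancel_right₀ (mobiusDenom_ne_zero g), neg_div_neg_eq]

theorem mobiusSubst_one : mobiusSubst (1 : GL (Fin 2) k) = 1 :=
  ratFunc_algHom_ext <| by
    rw [mobiusSubst_X]
    simp [mobiusInv, mobiusDenom, linForm_apply]

theorem mobiusSubst_mul (g h : GL (Fin 2) k) :
    mobiusSubst (g * h) = mobiusSubst g * mobiusSubst h :=
  ratFunc_algHom_ext <| by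
    rw [AlgHom.mul_apply, mobiusSubst_X, mobiusSubst_X]
    simp only [mobiusInv, mobiusDenom, neg_div, map_neg, mobiusSubst_linForm_div, mul_smul]

theorem mobiusInv_eq_X_iff (g : GL (Fin 2) k) :
    mobiusInv g = RatFunc.X ↔ g ∈ Subgroup.center (GL (Fin 2) k) := by
  rw [Matrix.GeneralLinearGroup.mem_center_iff_val_mem_range_scalar, mobiusInv,
    div_eq_iff (mobiusDenom_ne_zero g)]
  constructor
  · intro hg
    have hquad : RatFunc.C (g 1 0) * RatFunc.X ^ 2 + RatFunc.C (g 1 1 - g 0 0) * RatFunc.X +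
        RatFunc.C (-g 0 1) = 0 := by
      simp only [mobiusDenom, linForm_apply, Matrix.GeneralLinearGroup.fin_two_smul,
        Matrix.cons_val_zero, Matrix.cons_val_one, mul_zero, mul_one, zero_add, add_zero] at hg
      rw [map_sub, map_neg]
      linear_combination -hg
    obtain ⟨h₁₀, hdiag, h₀₁⟩ := ratFunc_quadratic_eq_zero hquad
    refine ⟨g 0 0, ?_⟩
    ext i j
    fin_cases i <;> fin_cases j <;> simp_all [sub_eq_zero]
  · rintro ⟨c, hc⟩
    simp [mobiusDenom, linForm_apply, ← hc, mul_comm]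

theorem mobiusSubst_eq_one_iff (g : GL (Fin 2) k) :
    mobiusSubst g = 1 ↔ g ∈ Subgroup.center (GL (Fin 2) k) := by
  rw [← mobiusInv_eq_X_iff, ← mobiusSubst_X]
  exact ⟨fun h => by rw [h, AlgHom.one_apply], fun h => ratFunc_algHom_ext h⟩

/-- The action of `PGL₂(k)` on `k(x)` by `k`-automorphisms, given by `f ↦ f ∘ σ⁻¹`. -/
noncomputable def PGL2.toAut : PGL2 k →* RatFunc k ≃ₐ[k] RatFunc k :=
  let substHom : GL (Fin 2) k →* (RatFunc k →ₐ[k] RatFunc k) :=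
    { toFun := mobiusSubst
      map_one' := mobiusSubst_one
      map_mul' := mobiusSubst_mul }
  QuotientGroup.lift _
    ((AlgEquiv.algHomUnitsEquiv k (RatFunc k)).toMonoidHom.comp substHom.toHomUnits)
    fun g hg => AlgEquiv.ext fun f => DFunLike.congr_fun ((mobiusSubst_eq_one_iff g).mpr hg) f

theorem PGL2.toAut_injective : Function.Injective (PGL2.toAut : PGL2 k → _) := by
  refine (injective_iff_map_eq_one _).mpr fun σ => ?_
  induction σ using QuotientGroup.induction_on with | H g =>
  intro hg
  rw [QuotientGroup.eq_one_iff, ← mobiusSubst_eq_one_iff]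
  exact AlgHom.ext fun f => DFunLike.congr_fun hg f

noncomputable instance : MulSemiringAction (PGL2 k) (RatFunc k) :=
  MulSemiringAction.compHom _ PGL2.toAut

theorem PGL2.mk_smul_ratFunc (g : GL (Fin 2) k) (f : RatFunc k) :
    (g : PGL2 k) • f = mobiusSubst g f := rfl

instance : FaithfulSMul (PGL2 k) (RatFunc k) :=
  ⟨fun h => PGL2.toAut_injective (AlgEquiv.ext h)⟩

instance : SMulCommClass (PGL2 k) k (RatFunc k) :=
  ⟨fun σ c f => map_smulₛₗ (PGL2.toAut σ) c f⟩

end Substitution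

namespace PGL2

open scoped MatrixGroups

variable {k : Type*} [Field k]

theorem mobius_eq_smul [DecidableEq k] (g : GL (Fin 2) k) (z : OnePoint k) :
    (g : Matrix (Fin 2) (Fin 2) k).mobius z = g • z := by
  cases z with
  | infty =>
    rw [smul_infty_eq_ite]
    split_ifs with hg
    exacts [if_pos hg, if_neg hg]
  | coe z =>
    rw [smul_some_eq_ite]
    split_ifs with hg
    exacts [if_pos hg, if_neg hg]

theorem smul_eq_self_of_mem_center [DecidableEq k] {g : GL (Fin 2) k}
    (hg : g ∈ Subgroup.center (GL (Fin 2) k)) (z : OnePoint k) : g • z = z := by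
  obtain ⟨c, rfl⟩ := Matrix.GeneralLinearGroup.center_eq_range_scalar.le hg
  cases z <;> simp [smul_infty_eq_ite, smul_some_eq_ite]

theorem act_mk [DecidableEq k] (g : GL (Fin 2) k) (z : OnePoint k) :
    act (g : PGL2 k) z = g • z := by
  obtain ⟨c, hc⟩ := QuotientGroup.mk_out_eq_mul (Subgroup.center (GL (Fin 2) k)) g
  calc act (g : PGL2 k) z = (g * c : GL (Fin 2) k) • z :=
        (mobius_eq_smul _ z).trans (congrArg (· • z) hc)
    _ = g • z := by rw [mul_smul, smul_eq_self_of_mem_center c.2]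

noncomputable instance : MulAction (PGL2 k) (OnePoint k) where
  smul := act
  one_smul z := by
    classical
    exact (act_mk 1 z).trans (one_smul _ z)
  mul_smul σ τ z := by
    classical
    induction σ using QuotientGroup.induction_on with | H g =>
    induction τ using QuotientGroup.induction_on with | H h =>
    change act (g * h : PGL2 k) z = act g (act h z)
    rw [← QuotientGroup.mk_mul, act_mk, act_mk, act_mk, mul_smul]

theorem mk_smul_onePoint [DecidableEq k] (g : GL (Fin 2) k) (z : OnePoint k) :
    (g : PGL2 k) • z = g • z :=
  act_mk g z

theorem exists_linForm_smul_homogCoord (g : GL (Fin 2) k) (c : OnePoint k) :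
    ∃ u : kˣ, linForm (g • homogCoord c) = u • ((g : PGL2 k) • c).ratFactor := by
  classical
  have hc : (g : PGL2 k) • c = (equivProjectivization k).symm
      (.mk k (g • homogCoord c) ((smul_ne_zero_iff_ne g).mpr (homogCoord_ne_zero c))) := by
    rw [mk_smul_onePoint, Equiv.eq_symm_apply, equivProjectivization_smul,
      equivProjectivization_eq_mk_homogCoord, Projectivization.smul_mk]
  rw [hc]
  exact exists_linForm_eq_smul_ratFactor _

theorem exists_smul_ratFactor_div (σ : PGL2 k) (a b : OnePoint k) : ∃ u : kˣ,
    σ • (a.ratFactor / b.ratFactor) = u • ((σ • a).ratFactor / (σ • b).ratFactor) := by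
  induction σ using QuotientGroup.induction_on with | H g =>
  obtain ⟨u, hu⟩ := exists_linForm_smul_homogCoord g a
  obtain ⟨v, hv⟩ := exists_linForm_smul_homogCoord g b
  refine ⟨u / v, ?_⟩
  rw [mk_smul_ratFunc, ← linForm_homogCoord a, ← linForm_homogCoord b, mobiusSubst_linForm_div,
    hu, hv]
  simp only [Units.smul_def, RatFunc.smul_eq_C_mul, Units.val_div_eq_div_val, map_div₀,
    mul_div_mul_comm]

theorem smul_ne_smul_of_not_sameOrbit {G : Subgroup (PGL2 k)} {a b : OnePoint k}
    (hab : ¬SameOrbit G a b) (σ τ : G) : σ • a ≠ τ • b := fun h =>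
  hab ⟨τ⁻¹ * σ, mul_mem (inv_mem τ.2) σ.2, by
    rw [← inv_smul_eq_iff, smul_smul] at h
    exact h⟩

variable {G : Subgroup (PGL2 k)} [Fintype G]

theorem smul_prod_ratFactor_div (a b : OnePoint k) (τ : G) :
    τ • ∏ σ : G, (σ • a).ratFactor / (σ • b).ratFactor =
      ∏ σ : G, (σ • a).ratFactor / (σ • b).ratFactor := by
  choose u hu using fun σ : G => exists_smul_ratFactor_div (σ : PGL2 k) a b
  have hnorm : ∏ σ : G, σ • (a.ratFactor / b.ratFactor) =
      (∏ σ, u σ) • ∏ σ : G, (σ • a).ratFactor / (σ • b).ratFactor := by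
    rw [← Finset.prod_smul]
    exact Finset.prod_congr rfl fun σ _ => hu σ
  have hfix := Finset.smul_prod_perm (a.ratFactor / b.ratFactor) τ
  rw [hnorm, smul_comm] at hfix
  exact smul_left_cancel _ hfix

end PGL2

/-- **Galois covers of `ℙ¹` from finite subgroups of `PGL₂`.**
Let `G` be a finite subgroup of `PGL₂(k)` and let `a, b ∈ ℙ¹(k)` be points not lying in the
same `G`-orbit.  Let `h = ∏_{σ ∈ G} (x - σ(a)) / (x - σ(b))` (with the convention that a
factor `x - c` is `1` when `c = ∞`).  Then `k(x)/k(h)` is a Galois extension of degree `#G`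
whose Galois group is isomorphic to `G`. -/
theorem galois_cover_of_PGL2_subgroup
    (k : Type*) [Field k] (G : Subgroup (PGL2 k)) [Fintype G] (a b : OnePoint k)
    (hab : ¬ PGL2.SameOrbit G a b)
    (h : RatFunc k)
    (hdef : h = ∏ σ : G, (OnePoint.ratFactor (PGL2.act (σ : PGL2 k) a) /
      OnePoint.ratFactor (PGL2.act (σ : PGL2 k) b)))
    (F : IntermediateField k (RatFunc k)) (hF : F = IntermediateField.adjoin k {h}) :
    IsGalois F (RatFunc k) ∧ Module.finrank F (RatFunc k) = Nat.card G ∧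
      Nonempty ((RatFunc k ≃ₐ[F] RatFunc k) ≃* G) := by
  have hle : F ≤ FixedPoints.intermediateField G := by
    rw [hF, IntermediateField.adjoin_simple_le_iff, hdef]
    exact PGL2.smul_prod_ratFactor_div a b
  have hcard : Module.finrank F (RatFunc k) = Nat.card G := by
    rw [hF, hdef, Nat.card_eq_fintype_card]
    exact finrank_adjoin_prod_ratFactor_div (PGL2.smul_ne_smul_of_not_sameOrbit hab)
  have hgal : IsGaloisGroup G F (RatFunc k) := isGaloisGroup_of_finrank_eq_card hle hcard
  exact ⟨hgal.isGalois, hcard, ⟨(IsGaloisGroup.mulEquivAlgEquiv G F (RatFunc k)).symm⟩⟩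
end

section
/- Let G be a finite subgroup of PGL_2(ℂ) and let b ∈ ℂ be a point lying in the same G-orbit as the point ∞ ∈ ℙ¹(ℂ). Then the rational function φ ∈ ℂ(z) defined by φ(z) = ∏_{σ∈G} (σ(z) − b) is constant. -/
open Polynomial OnePoint

/-- The rational function `σ(z) = (a * z + b) / (c * z + d) ∈ k(z)` attached to an element
`σ` of `PGL₂(k)` with representative matrix `!![a, b; c, d]`. -/
noncomputable def PGL2.toRatFunc {k : Type*} [Field k] (g : PGL2 k) : RatFunc k :=
  letI M := ((Quotient.out g : Matrix.GeneralLinearGroup (Fin 2) k) : Matrix (Fin 2) (Fin 2) k)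
  (RatFunc.C (M 0 0) * RatFunc.X + RatFunc.C (M 0 1)) /
    (RatFunc.C (M 1 0) * RatFunc.X + RatFunc.C (M 1 1))

/-!
Fix `τ ∈ G` with `τ(∞) = b` and write each `σ ∈ G` as `σ = τρ`. Since `τ(z) - b` vanishes at `∞`,
it is a constant divided by the denominator of `τ`; hence `σ(z) - b = τ(ρ(z)) - b` is a constant
times `d_ρ / d_{τρ}`, where `d_ρ` denotes the denominator of `ρ`. As `ρ` runs over `G`, so does
`τρ`, and in the product the denominators cancel.
-/

theorem prod_div_mul_left_eq_one {G M : Type*} [Group G] [Fintype G] [CommGroupWithZero M]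
    {f : G → M} (hf : ∀ g, f g ≠ 0) (a : G) : ∏ g, f g / f (a * g) = 1 := by
  have reindex : ∏ g, f (a * g) = ∏ g, f g := Equiv.prod_comp (Equiv.mulLeft a) f
  rw [Finset.prod_div_distrib, reindex, div_self (Finset.prod_ne_zero_iff.2 fun g _ => hf g)]

theorem ratFunc_C_mul_X_add_C_eq_zero_iff {R : Type*} [CommRing R] [IsDomain R] {a b : R} :
    RatFunc.C a * RatFunc.X + RatFunc.C b = 0 ↔ a = 0 ∧ b = 0 := by
  refine ⟨fun h => ?_, by rintro ⟨rfl, rfl⟩; simp⟩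
  have hp : Polynomial.C a * Polynomial.X + Polynomial.C b = 0 :=
    RatFunc.algebraMap_injective R (by simpa using h)
  exact ⟨by simpa using congrArg (coeff · 1) hp, by simpa using congrArg (coeff · 0) hp⟩

namespace PGL2

section LinearForms

variable {R : Type*} [CommRing R] [IsDomain R]

/-- The numerator `a * z + b` of the homography `(a * z + b) / (c * z + d)` attached to the matrix
`!![a, b; c, d]`, not reduced against the denominator. -/
noncomputable def num (M : Matrix (Fin 2) (Fin 2) R) : RatFunc R :=
  RatFunc.C (M 0 0) * RatFunc.X + RatFunc.C (M 0 1)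

/-- The denominator `c * z + d` of the homography `(a * z + b) / (c * z + d)` attached to the matrix
`!![a, b; c, d]`, not reduced against the numerator. Scaling the matrix scales it, so it is not a
function of the homography alone. -/
noncomputable def denom (M : Matrix (Fin 2) (Fin 2) R) : RatFunc R :=
  RatFunc.C (M 1 0) * RatFunc.X + RatFunc.C (M 1 1)

theorem denom_ne_zero {M : Matrix (Fin 2) (Fin 2) R} (hM : M.det ≠ 0) : denom M ≠ 0 := by
  intro h
  obtain ⟨hc, hd⟩ := ratFunc_C_mul_X_add_C_eq_zero_iff.1 h
  exact hM (by simp [Matrix.det_fin_two, hc, hd])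

theorem num_smul (a : R) (M : Matrix (Fin 2) (Fin 2) R) :
    num (a • M) = RatFunc.C a * num M := by
  simp only [num, Matrix.smul_apply, smul_eq_mul, map_mul]
  ring

theorem denom_smul (a : R) (M : Matrix (Fin 2) (Fin 2) R) :
    denom (a • M) = RatFunc.C a * denom M := by
  simp only [denom, Matrix.smul_apply, smul_eq_mul, map_mul]
  ring

theorem num_mul (M N : Matrix (Fin 2) (Fin 2) R) :
    num (M * N) = RatFunc.C (M 0 0) * num N + RatFunc.C (M 0 1) * denom N := by
  simp only [num, denom, Matrix.mul_apply, Fin.sum_univ_two, map_add, map_mul]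
  ring

theorem denom_mul (M N : Matrix (Fin 2) (Fin 2) R) :
    denom (M * N) = RatFunc.C (M 1 0) * num N + RatFunc.C (M 1 1) * denom N := by
  simp only [num, denom, Matrix.mul_apply, Fin.sum_univ_two, map_add, map_mul]
  ring

theorem num_mul_sub_C_mul_denom_mul {M : Matrix (Fin 2) (Fin 2) R} {b : R}
    (hM : M 0 0 = b * M 1 0) (N : Matrix (Fin 2) (Fin 2) R) :
    num (M * N) - RatFunc.C b * denom (M * N) = RatFunc.C (M 0 1 - b * M 1 1) * denom N := by
  rw [num_mul, denom_mul, hM, map_sub, map_mul, map_mul]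
  ring

end LinearForms

variable {k : Type*} [Field k]

theorem mobius_infty_eq_coe_iff {M : Matrix (Fin 2) (Fin 2) k} {b : k} :
    M.mobius ∞ = (b : OnePoint k) ↔ M 1 0 ≠ 0 ∧ M 0 0 = b * M 1 0 := by
  classical
  change (if M 1 0 = 0 then ∞ else ((M 0 0 / M 1 0 : k) : OnePoint k)) = b ↔ _
  split_ifs with h
  · simp [h]
  · rw [OnePoint.coe_eq_coe, div_eq_iff h, and_iff_right h]

/-- The representative matrix of `g` through which `PGL2.act` and `PGL2.toRatFunc` are defined;
it is multiplicative only up to scalars. -/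
noncomputable def rep (g : PGL2 k) : Matrix.GeneralLinearGroup (Fin 2) k :=
  Quotient.out g

theorem exists_rep_mul_eq_smul (g h : PGL2 k) :
    ∃ u : kˣ, (rep (g * h)).val = (u : k) • ((rep g).val * (rep h).val) := by
  have mk_rep_mul_rep : (QuotientGroup.mk (rep g * rep h) : PGL2 k) = g * h := by
    rw [QuotientGroup.mk_mul]
    exact congrArg₂ (· * ·) (QuotientGroup.out_eq' g) (QuotientGroup.out_eq' h)
  obtain ⟨⟨z, hz⟩, hrep⟩ := QuotientGroup.mk_out_eq_mul (Subgroup.center _) (rep g * rep h)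
  rw [Matrix.GeneralLinearGroup.center_eq_range_scalar] at hz
  obtain ⟨u, rfl⟩ := hz
  rw [mk_rep_mul_rep] at hrep
  refine ⟨u, ?_⟩
  rw [rep, hrep]
  ext i j
  simp [mul_comm]

theorem denom_rep_ne_zero (g : PGL2 k) : denom (rep g).val ≠ 0 :=
  denom_ne_zero (rep g).det_ne_zero

theorem toRatFunc_sub_C (g : PGL2 k) (b : k) :
    toRatFunc g - RatFunc.C b =
      (num (rep g).val - RatFunc.C b * denom (rep g).val) / denom (rep g).val := by
  rw [sub_div, mul_div_cancel_right₀ _ (denom_rep_ne_zero g)]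
  rfl

theorem exists_toRatFunc_mul_sub_C_eq {τ : PGL2 k} {b : k} (hτ : act τ ∞ = (b : OnePoint k))
    (ρ : PGL2 k) :
    ∃ c : k, toRatFunc (τ * ρ) - RatFunc.C b =
      RatFunc.C c * (denom (rep ρ).val / denom (rep (τ * ρ)).val) := by
  obtain ⟨u, hu⟩ := exists_rep_mul_eq_smul τ ρ
  have hb : rep τ 0 0 = b * rep τ 1 0 := (mobius_infty_eq_coe_iff.1 hτ).2
  have numerator_eq : num (rep (τ * ρ)).val - RatFunc.C b * denom (rep (τ * ρ)).val =
      RatFunc.C (u * (rep τ 0 1 - b * rep τ 1 1)) * denom (rep ρ).val := by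
    rw [hu, num_smul, denom_smul, mul_left_comm, ← mul_sub, num_mul_sub_C_mul_denom_mul hb,
      ← mul_assoc, ← map_mul]
  exact ⟨_, by rw [toRatFunc_sub_C, numerator_eq, mul_div_assoc]⟩

end PGL2

theorem prod_orbit_infty_sub_const_is_constant_general {k : Type*} [Field k]
    (G : Subgroup (PGL2 k)) [Fintype G] (b : k)
    (hb : PGL2.SameOrbit G (∞ : OnePoint k) (b : OnePoint k)) :
    ∃ c : k, (∏ σ : G, (PGL2.toRatFunc (σ : PGL2 k) - RatFunc.C b)) = RatFunc.C c := by
  obtain ⟨τ, hτG, hτ⟩ := hb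
  choose c hc using PGL2.exists_toRatFunc_mul_sub_C_eq hτ
  let d (ρ : G) : RatFunc k := PGL2.denom (PGL2.rep (ρ : PGL2 k)).val
  let t : G := ⟨τ, hτG⟩
  refine ⟨∏ ρ : G, c ρ, ?_⟩
  calc ∏ σ : G, (PGL2.toRatFunc (σ : PGL2 k) - RatFunc.C b)
      = ∏ ρ : G, (PGL2.toRatFunc (τ * (ρ : PGL2 k)) - RatFunc.C b) :=
        (Equiv.prod_comp (Equiv.mulLeft t)
          fun σ : G => PGL2.toRatFunc (σ : PGL2 k) - RatFunc.C b).symm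
    _ = ∏ ρ : G, RatFunc.C (c ρ) * (d ρ / d (t * ρ)) := Finset.prod_congr rfl fun ρ _ => hc ρ
    _ = RatFunc.C (∏ ρ : G, c ρ) := by
        rw [Finset.prod_mul_distrib,
          prod_div_mul_left_eq_one (fun ρ => PGL2.denom_rep_ne_zero ρ.1) t, mul_one, map_prod]

/-- Let `G` be a finite subgroup of `PGL₂(ℂ)` and let `b ∈ ℂ` be a point lying in the same
`G`-orbit as `∞ ∈ ℙ¹(ℂ)`.  Then the rational function `φ(z) = ∏_{σ ∈ G} (σ(z) - b)` is
constant. -/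
theorem prod_orbit_infty_sub_const_is_constant
    (G : Subgroup (PGL2 ℂ)) [Fintype G] (b : ℂ)
    (hb : PGL2.SameOrbit G (∞ : OnePoint ℂ) ((b : ℂ) : OnePoint ℂ)) :
    ∃ c : ℂ, (∏ σ : G, (PGL2.toRatFunc (σ : PGL2 ℂ) - RatFunc.C b)) = RatFunc.C c :=
  prod_orbit_infty_sub_const_is_constant_general G b hb
end

section
/- Let (α,β) and (γ,δ) be two distinct pairs of integers with α ≥ 1, γ ≥ 1, gcd(α,β) = 1 and gcd(γ,δ) = 1. Let K be a number field and let x be an element of its ring of integers O_K. Then the integer (αδ−βγ)/gcd(α,γ) belongs to the ideal of O_K generated by αx−β and γx−δ; equivalently, the ideal (αx−β, γx−δ) of O_K divides the principal ideal generated by (αδ−βγ)/gcd(α,γ). -/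
open NumberField

theorem mul_sub_mul_mem_span_pair {R : Type*} [CommRing R] (g a b c d x : R) :
    a * d - b * c ∈ Ideal.span {g * a * x - b, g * c * x - d} :=
  Ideal.mem_span_pair.mpr ⟨c, -a, by ring⟩

theorem gcd_mem_span_pair_general {R : Type*} [CommRing R] {g α γ : ℤ} (hg : g ≠ 0)
    (hgα : g ∣ α) (hgγ : g ∣ γ) (β δ : ℤ) (x : R) :
    (((α * δ - β * γ) / g : ℤ) : R) ∈
      Ideal.span {(α : R) * x - (β : R), (γ : R) * x - (δ : R)} := by
  obtain ⟨a, rfl⟩ := hgα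
  obtain ⟨c, rfl⟩ := hgγ
  have quotient_eq : (g * a * δ - β * (g * c)) / g = a * δ - β * c :=
    Int.ediv_eq_of_eq_mul_right hg (by ring)
  rw [quotient_eq]
  push_cast
  exact mul_sub_mul_mem_span_pair (g : R) a β c δ x

/-- **Coprimality lemma (Lemma 3.9 of the paper).**
Let `(α, β)` and `(γ, δ)` be two distinct pairs of coprime integers with `α, γ ≥ 1`, let
`K` be a number field and let `x` be an algebraic integer in `K`.  Then the integer
`(αδ - βγ)/gcd(α, γ)` belongs to the ideal of `O_K` generated by `αx - β` and `γx - δ`;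
equivalently, the ideal `(αx - β, γx - δ)` divides `(αδ - βγ)/gcd(α, γ)`. -/
theorem gcd_mem_span_pair
    (α β γ δ : ℤ) (hα : 1 ≤ α) (hγ : 1 ≤ γ)
    (hαβ : IsCoprime α β) (hγδ : IsCoprime γ δ) (hne : (α, β) ≠ (γ, δ))
    (K : Type*) [Field K] [NumberField K] (x : 𝓞 K) :
    (((α * δ - β * γ) / (Int.gcd α γ : ℤ) : ℤ) : 𝓞 K) ∈
      Ideal.span {(α : 𝓞 K) * x - (β : 𝓞 K), (γ : 𝓞 K) * x - (δ : 𝓞 K)} := by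
  have hg : (Int.gcd α γ : ℤ) ≠ 0 := mod_cast Int.gcd_ne_zero_left (by lia : α ≠ 0)
  exact gcd_mem_span_pair_general hg (Int.gcd_dvd_left α γ) (Int.gcd_dvd_right α γ) β δ x
end

section
/- Let n > 1 be an integer. There exist infinitely many pairwise non-isomorphic number fields K with the following properties: there is a positive integer y with y odd and y not divisible by 3 such that the polynomial x² + ((yⁿ−5)/2)x + 1 is irreducible over ℚ and K is its splitting field; K is a real quadratic field (degree 2, totally real); and rank_n Cl(K) ≥ 1. -/
open Polynomial NumberField

/-- `M` contains a subgroup isomorphic to `(ℤ/nℤ)^s`, i.e. `rank_n M ≥ s`. -/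
def HasZModRankGE (M : Type*) [CommGroup M] (n s : ℕ) : Prop :=
  ∃ φ : (Multiplicative (Fin s → ZMod n)) →* M, Function.Injective φ

/-- A number field (here a subfield of `ℂ`) is totally real if all of its complex
embeddings take real values. -/
def TotallyReal (K : Type*) [Field K] : Prop :=
  ∀ (φ : K →+* ℂ) (x : K), (φ x).im = 0

/-!
Let `x > 1` satisfy `x + x⁻¹ = (y ^ n - 5) / 2`. Then `-x` is a root of the polynomial, `η = x` is
a unit of the field `K` that it generates, and `(2 + η) * (2 + η⁻¹) = y ^ n`. Since `3 ∤ y` the two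
factors are coprime, so `(2 + η) = d ^ n` for an ideal `d`. If the class of `d` had order less than
`n`, then `2 + η` would be a unit times a `p`-th power for a prime `p ∣ n`. The unit rank being one,
`η` or one of `η ^ i * (2 + η)`, `-1 ≤ i < p - 1`, would then be a `p`-th power up to torsion.

The trace of such a `p`-th root is an integer. For `i = -1` its norm is `± y ^ (n / p)` and the
trace would have to lie strictly between consecutive integers. In all other cases the trace is
within `O(1 / y)` of the value at `y` of one of finitely many polynomials with irrational leading
coefficient. By van der Waerden's theorem and finite differences there are arbitrarily large `y` at
which these values all have distance at least a fixed `ε > 0` from the integers, so the class of `d`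
has order `n`.

Replacing `n` by its multiples `k * n` and `y` by `y ^ k` gives fields for the exponent `n` with
arbitrarily large class number, hence infinitely many of them.
-/

section DistanceToIntegers

open Filter Finset

theorem exists_bounded_mono_homothetic_copy {M κ : Type*} [AddCommMonoid M] [Finite κ]
    (S : Finset M) :
    ∃ H : ℕ, ∀ color : M → κ, ∃ a ∈ Icc 1 H, ∃ (b : M) (c : κ),
      ∀ s ∈ S, color (a • s + b) = c := by
  classical
  obtain ⟨ι, _, hι⟩ := Combinatorics.Line.exists_mono_in_high_dimension S κ
  refine ⟨Fintype.card ι, fun color => ?_⟩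
  obtain ⟨l, c, hl⟩ := hι fun v => color (∑ i, (v i : M))
  set A : Finset ι := {i | l.idxFun i = none}
  have hA : A.Nonempty := l.proper.imp fun i hi => by simpa [A] using hi
  refine ⟨#A, mem_Icc.2 ⟨hA.card_pos, card_le_univ A⟩,
    ∑ i ∈ Aᶜ, ((l.idxFun i).map Subtype.val).getD 0, c, fun s hs => ?_⟩
  rw [← hl ⟨s, hs⟩]
  beta_reduce
  rw [← sum_add_sum_compl A, ← sum_const]
  congr 2
  · refine sum_congr rfl fun i hi => ?_
    rw [l.apply_none _ _ (by simpa [A] using hi)]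
  · refine sum_congr rfl fun i hi => ?_
    obtain ⟨t, ht⟩ := Option.ne_none_iff_exists'.1 (show l.idxFun i ≠ none by simpa [A] using hi)
    rw [l.apply_some ht, ht, Option.map_some, Option.getD_some]

theorem norm_fwdDiff_iter_le {M G : Type*} [AddCommMonoid M] [SeminormedAddCommGroup G]
    {f : M → G} {h : M} {ε : ℝ} {n : ℕ} {y : M} (hf : ∀ k ≤ n, ‖f (y + k • h)‖ ≤ ε) :
    ‖(fwdDiff h)^[n] f y‖ ≤ 2 ^ n * ε := by
  induction n generalizing y with
  | zero => simpa using hf 0 le_rfl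
  | succ n ih =>
    have step : ‖(fwdDiff h)^[n] f (y + h)‖ ≤ 2 ^ n * ε := ih fun k hk => by
      simpa only [succ_nsmul', add_assoc] using hf (k + 1) (Nat.succ_le_succ hk)
    have base : ‖(fwdDiff h)^[n] f y‖ ≤ 2 ^ n * ε := ih fun k hk => hf k (hk.trans n.le_succ)
    rw [Function.iterate_succ_apply']
    calc ‖(fwdDiff h)^[n] f (y + h) - (fwdDiff h)^[n] f y‖
        ≤ ‖(fwdDiff h)^[n] f (y + h)‖ + ‖(fwdDiff h)^[n] f y‖ := norm_sub_le _ _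
      _ ≤ 2 ^ n * ε + 2 ^ n * ε := add_le_add step base
      _ = 2 ^ (n + 1) * ε := by ring

theorem map_fwdDiff_iter {M G G' : Type*} [AddCommMonoid M] [AddCommGroup G] [AddCommGroup G']
    (φ : G →+ G') (f : M → G) (h : M) (n : ℕ) (y : M) :
    φ ((fwdDiff h)^[n] f y) = (fwdDiff h)^[n] (φ ∘ f) y := by
  simp only [fwdDiff_iter_eq_sum_shift, map_sum, map_zsmul, Function.comp_apply]

theorem fwdDiff_iter_natDegree_eval {R : Type*} [CommRing R] [IsDomain R] (P : R[X])
    {h : R} (hh : h ≠ 0) (y : R) :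
    (fwdDiff h)^[P.natDegree] P.eval y =
      P.leadingCoeff * h ^ P.natDegree * P.natDegree.factorial := by
  set Q := P.comp (C h * X + C y)
  have natDegree_Q : Q.natDegree = P.natDegree := by
    rw [natDegree_comp, natDegree_linear hh, mul_one]
  have leadingCoeff_Q : Q.leadingCoeff = P.leadingCoeff * h ^ P.natDegree := by
    rw [leadingCoeff_comp (by simp [natDegree_linear hh]), leadingCoeff_linear hh]
  calc (fwdDiff h)^[P.natDegree] P.eval y = (fwdDiff 1)^[Q.natDegree] Q.eval 0 := by
        simp only [fwdDiff_iter_eq_sum_shift, natDegree_Q]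
        simp only [Q, eval_comp, eval_add, eval_mul, eval_C, eval_X, nsmul_eq_mul, mul_one,
          zero_add, add_comm y, mul_comm h]
    _ = P.leadingCoeff * h ^ P.natDegree * P.natDegree.factorial := by
        rw [fwdDiff_iter_degree_eq_factorial, leadingCoeff_Q, natDegree_Q]
        simp

theorem norm_coe_pos_of_irrational {x : ℝ} (hx : Irrational x) : 0 < ‖(x : UnitAddCircle)‖ := by
  rw [UnitAddCircle.norm_eq, abs_pos, sub_ne_zero]
  exact hx.ne_int _

theorem norm_leadingCoeff_mul_le {P : ℝ[X]} {h y ε : ℝ} (hh : h ≠ 0)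
    (hP : ∀ k ≤ P.natDegree, ‖((P.eval (y + k * h) : ℝ) : UnitAddCircle)‖ ≤ ε) :
    ‖((P.leadingCoeff * h ^ P.natDegree * P.natDegree.factorial : ℝ) : UnitAddCircle)‖ ≤
      2 ^ P.natDegree * ε := by
  rw [← fwdDiff_iter_natDegree_eval P hh y]
  calc _ = ‖(fwdDiff h)^[P.natDegree] ((↑) ∘ P.eval : ℝ → UnitAddCircle) y‖ :=
        congrArg norm (map_fwdDiff_iter (QuotientAddGroup.mk' _) P.eval h P.natDegree y)
    _ ≤ _ := norm_fwdDiff_iter_le fun k hk => by simpa using hP k hk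

theorem exists_bounded_progression_norm_eval_lt {ι : Type*} [Finite ι] (f : ι → ℝ[X]) :
    ∃ H : ℕ, ∀ ε : ℝ, (∀ᶠ y : ℕ in atTop, ∃ i, ‖(((f i).eval (y : ℝ) : ℝ) : UnitAddCircle)‖ < ε) →
      ∃ i, ∃ a ∈ Icc 1 H, ∃ b : ℕ, ∀ k ≤ (f i).natDegree,
        ‖(((f i).eval (b + k * a : ℝ) : ℝ) : UnitAddCircle)‖ < ε := by
  cases nonempty_fintype ι
  obtain ⟨H, hH⟩ := exists_bounded_mono_homothetic_copy (κ := ι)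
    (range (univ.sup (fun i => (f i).natDegree) + 1))
  refine ⟨H, fun ε hε => ?_⟩
  obtain ⟨B, hB⟩ := eventually_atTop.1 hε
  -- van der Waerden's theorem, with `y` coloured by an index whose polynomial is small at `y + B`
  choose color hcolor using fun y : ℕ => hB (y + B) le_add_self
  obtain ⟨a, ha, b, i, hi⟩ := hH color
  refine ⟨i, a, ha, b + B, fun k hk => ?_⟩
  have mono : color (a • k + b) = i :=
    hi k (mem_range_succ_iff.2 (hk.trans (le_sup (f := fun i => (f i).natDegree) (mem_univ i))))
  have shift : ((b + B : ℕ) + k * a : ℝ) = (a • k + b + B : ℕ) := by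
    push_cast [smul_eq_mul]
    ring
  rw [shift, ← mono]
  exact hcolor _

theorem exists_pos_frequently_le_norm_eval {ι : Type*} [Finite ι] (f : ι → ℝ[X])
    (hf : ∀ i, Irrational (f i).leadingCoeff) :
    ∃ ε > 0, ∃ᶠ y : ℕ in atTop, ∀ i, ε ≤ ‖(((f i).eval (y : ℝ) : ℝ) : UnitAddCircle)‖ := by
  obtain ⟨H, hH⟩ := exists_bounded_progression_norm_eval_lt f
  let lead (i : ι) (a : ℕ) : ℝ :=
    (f i).leadingCoeff * a ^ (f i).natDegree * (f i).natDegree.factorial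
  have lead_pos (j : ι × Icc 1 H) :
      0 < ‖(lead j.1 j.2 : UnitAddCircle)‖ / 2 ^ (f j.1).natDegree := by
    have ha : 0 < j.2.1 := (mem_Icc.1 j.2.2).1
    have irrational : Irrational (lead j.1 j.2) := by
      simp only [lead, ← Nat.cast_pow]
      exact ((hf j.1).mul_natCast (by positivity)).mul_natCast (by positivity)
    exact div_pos (norm_coe_pos_of_irrational irrational) (by positivity)
  obtain ⟨ε, hε, lead_gt⟩ := Pi.exists_forall_pos_add_lt lead_pos
  refine ⟨ε, hε, fun hsmall => ?_⟩
  obtain ⟨i, a, ha, b, hi⟩ := hH ε (by simpa only [not_forall, not_le] using hsmall)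
  have ha0 : (a : ℝ) ≠ 0 := Nat.cast_ne_zero.2 (Nat.one_le_iff_ne_zero.1 (mem_Icc.1 ha).1)
  have lead_le : ‖(lead i a : UnitAddCircle)‖ ≤ 2 ^ (f i).natDegree * ε :=
    norm_leadingCoeff_mul_le ha0 fun k hk => (hi k hk).le
  refine (lead_gt ⟨i, a, ha⟩).not_ge ?_
  rwa [zero_add, div_le_iff₀' (by positivity)]

end DistanceToIntegers

section IntegralTrace

open Filter Finset

/-- `±u ± v` is an integer for some choice of signs: what remains of the integrality of the trace
of a quadratic integer when only the absolute values `u` and `v` of its conjugates are known. -/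
def HasIntegralTrace (u v : ℝ) : Prop :=
  ∃ T : ℤ, u + v = T ∨ u - v = T

theorem HasIntegralTrace.norm_le {u v U V : ℝ} (h : HasIntegralTrace u v) :
    ∃ t ∈ ({-1, 1} : Finset ℤ), ‖((U + t * V : ℝ) : UnitAddCircle)‖ ≤ |u - U| + |v - V| := by
  have key (t T : ℤ) (ht : |t| = 1) (hT : u + t * v = T) :
      ‖((U + t * V : ℝ) : UnitAddCircle)‖ ≤ |u - U| + |v - V| := by
    have ht' : |(t : ℝ)| = 1 := by exact_mod_cast congrArg (Int.cast : ℤ → ℝ) ht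
    rw [UnitAddCircle.norm_eq]
    calc |U + t * V - round (U + t * V)| ≤ |U + t * V - T| := round_le _ _
      _ = |(u - U) + t * (v - V)| := by rw [← hT, ← abs_neg]; ring_nf
      _ ≤ |u - U| + |t * (v - V)| := abs_add_le _ _
      _ = |u - U| + |v - V| := by rw [abs_mul, ht', one_mul]
  obtain ⟨T, hT | hT⟩ := h
  · exact ⟨1, by simp, key 1 T abs_one (by simpa using hT)⟩
  · exact ⟨-1, by simp, key (-1) T (by simp) (by simpa [sub_eq_add_neg] using hT)⟩

theorem not_hasIntegralTrace_of_mul_eq {u v : ℝ} {w : ℤ} (hu : 1 < u) (hv : 1 < v)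
    (huv : u * v = w) (hsmall : (u - 1) * (v + 1) < 1) : ¬ HasIntegralTrace u v := by
  rintro ⟨T, hT | hT⟩
  · have lower : (w : ℝ) < T := by nlinarith
    have upper : (T : ℝ) < w + 1 := by nlinarith
    norm_cast at lower upper
    omega
  · have lower : (1 - w : ℝ) < T := by nlinarith
    have upper : (T : ℝ) < 2 - w := by nlinarith
    norm_cast at lower upper
    omega

theorem abs_sub_le_mul_of_pow_mem_Icc {u U δ : ℝ} {p k : ℕ} (hp : p ≠ 0) (hkp : k ≤ p)
    (hu : 0 ≤ u) (hU : 0 ≤ U) (hδ : δ ∈ Set.Icc 0 1)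
    (h : u ^ p ∈ Set.Icc ((1 - δ) ^ k * U ^ p) (U ^ p)) : |u - U| ≤ δ * U := by
  have lower : (1 - δ) * U ≤ u := by
    refine le_of_pow_le_pow_left₀ hp hu ?_
    calc ((1 - δ) * U) ^ p = (1 - δ) ^ p * U ^ p := mul_pow _ _ _
      _ ≤ (1 - δ) ^ k * U ^ p := by
        gcongr ?_ * _
        exact pow_le_pow_of_le_one (sub_nonneg.2 hδ.2) (sub_le_self _ hδ.1) hkp
      _ ≤ u ^ p := h.1
  have upper : u ≤ U := le_of_pow_le_pow_left₀ hp hU h.2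
  rw [abs_sub_comm, abs_of_nonneg (sub_nonneg.2 upper)]
  linarith

theorem sub_le_pow_sub_pow {a b : ℝ} {p : ℕ} (hp : p ≠ 0) (hb : 1 ≤ b) (hab : b ≤ a) :
    a - b ≤ a ^ p - b ^ p := by
  obtain ⟨q, rfl⟩ := Nat.exists_eq_succ_of_ne_zero hp
  have one_le : 1 ≤ b ^ q := one_le_pow₀ hb
  have pow_le_pow : b ^ q ≤ a ^ q := by gcongr
  rw [pow_succ, pow_succ]
  nlinarith

theorem irrational_pow_of_pow_eq_two {n m : ℕ} {R : ℝ} (hR : 0 < R) (hRn : R ^ n = 2)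
    (hm : m ∈ Ioo 0 n) : Irrational (R ^ m) := by
  obtain ⟨hm0, hmn⟩ := mem_Ioo.1 hm
  have one_lt_R : 1 < R :=
    (one_lt_pow_iff_of_nonneg hR.le (hm0.trans hmn).ne').1 (by rw [hRn]; norm_num)
  refine irrational_nrt_of_notint_nrt n (2 ^ m) (by rw [← pow_mul, mul_comm, pow_mul, hRn]; simp)
    ?_ (hm0.trans hmn)
  rintro ⟨z, hz⟩
  have lower : (1 : ℝ) < z := hz ▸ one_lt_pow₀ one_lt_R hm0.ne'
  have upper : (z : ℝ) < 2 := hz ▸ hRn ▸ pow_lt_pow_right₀ one_lt_R hmn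
  norm_cast at lower upper
  omega

/-- No `(y / R) ^ m + t * R ^ m` with `0 < m < n` and `|t| ≤ 1` is within `20 / y` of an integer.
For `R = 2 ^ (1 / n)` and `x + x⁻¹ = (y ^ n - 5) / 2`, these numbers approximate the traces that
would occur if `2 + η` were a `p`-th power up to units, `η` being a unit with conjugates `x` and
`x⁻¹`. -/
def IsRemoteFromIntegers (R : ℝ) (n y : ℕ) : Prop :=
  ∀ m ∈ Ioo 0 n, ∀ t ∈ ({-1, 0, 1} : Finset ℤ),
    20 / y < ‖(((y / R) ^ m + t * R ^ m : ℝ) : UnitAddCircle)‖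

theorem exists_isRemoteFromIntegers {n : ℕ} {R : ℝ} (hR : 0 < R) (hRn : R ^ n = 2) (B : ℕ) :
    ∃ y ≥ B, y % 6 = 1 ∧ IsRemoteFromIntegers R n y := by
  let f (j : Ioo 0 n × ({-1, 0, 1} : Finset ℤ)) : ℝ[X] :=
    (C (6 / R) * X + C (1 / R)) ^ j.1.1 + C (j.2.1 * R ^ j.1.1)
  have leadingCoeff_f (j) : (f j).leadingCoeff = (6 / R) ^ j.1.1 := by
    have hm : 0 < j.1.1 := (mem_Ioo.1 j.1.2).1
    have hdeg : (C (j.2.1 * R ^ j.1.1) : ℝ[X]).degree <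
        ((C (6 / R) * X + C (1 / R)) ^ j.1.1).degree := by
      rw [degree_pow, degree_linear (by positivity)]
      exact degree_C_le.trans_lt (by simpa using hm)
    rw [leadingCoeff_add_of_degree_lt' hdeg, leadingCoeff_pow, leadingCoeff_linear (by positivity)]
  have irrational_f (j) : Irrational (f j).leadingCoeff := by
    rw [leadingCoeff_f, div_pow, ← Nat.cast_ofNat, ← Nat.cast_pow]
    exact (irrational_pow_of_pow_eq_two hR hRn j.1.2).natCast_div (by positivity)
  obtain ⟨ε, hε, hfar⟩ := exists_pos_frequently_le_norm_eval f irrational_f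
  obtain ⟨z, hz, hzB, hzε⟩ := (hfar.and_eventually ((eventually_ge_atTop B).and
    (tendsto_natCast_atTop_atTop.eventually_gt_atTop (20 / ε)))).exists
  refine ⟨6 * z + 1, by omega, by omega, fun m hm t ht => ?_⟩
  have hy : 20 / ε < (6 * z + 1 : ℕ) := by push_cast; linarith
  calc 20 / ((6 * z + 1 : ℕ) : ℝ) < ε := by
        rwa [div_lt_comm₀ (by positivity) hε]
    _ ≤ ‖(((f (⟨m, hm⟩, ⟨t, ht⟩)).eval (z : ℝ) : ℝ) : UnitAddCircle)‖ := hz _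
    _ = _ := by
      congr 2
      simp [f]
      ring

theorem IsRemoteFromIntegers.not_hasIntegralTrace {R u v : ℝ} {n y m : ℕ} {τ : ℤ}
    (hfar : IsRemoteFromIntegers R n y) (hm : m ∈ Ioo 0 n) (hτ : τ = 0 ∨ τ = 1)
    (hu : |u - (y / R) ^ m| ≤ 8 / y) (hv : |v - τ * R ^ m| ≤ 12 / y) : ¬ HasIntegralTrace u v := by
  intro h
  obtain ⟨t, ht, hle⟩ := h.norm_le (U := (y / R) ^ m) (V := τ * R ^ m)
  have htτ : t * τ ∈ ({-1, 0, 1} : Finset ℤ) := by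
    simp only [mem_insert, mem_singleton] at ht ⊢
    rcases hτ with rfl | rfl <;> omega
  refine (hfar m hm _ htτ).not_ge ?_
  calc ‖(((y / R) ^ m + (t * τ : ℤ) * R ^ m : ℝ) : UnitAddCircle)‖
      = ‖(((y / R) ^ m + t * (τ * R ^ m) : ℝ) : UnitAddCircle)‖ := by push_cast; rw [mul_assoc]
    _ ≤ 8 / y + 12 / y := hle.trans (add_le_add hu hv)
    _ = 20 / y := by ring

/-- If `x` and `x⁻¹` are the conjugates of a unit `η` of a real quadratic field, then, up to sign,
neither `η` nor any `η ^ i * (2 + η)` with `-1 ≤ i < p - 1` is a `p`-th power in the ring of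
integers, for all divisors `p > 1` of `n`. The integers of the field enter only through the
absolute values `u` and `v` of their conjugates. -/
def IsFreeOfPowers (n : ℕ) (x : ℝ) : Prop :=
  ∀ p : ℕ, p ∣ n → 1 < p → ∀ u v : ℝ, 0 < u → 0 < v → HasIntegralTrace u v →
    ¬ (u ^ p = x ∧ v ^ p = x⁻¹) ∧
    ∀ i ∈ Ico (-1 : ℤ) (p - 1), ¬ (u ^ p = x ^ i * (2 + x) ∧ v ^ p = x⁻¹ ^ i * (2 + x⁻¹))

section Parameter

variable {n y p : ℕ} {x u v : ℝ}

theorem mem_Ioo_of_two_mul_add_inv (hx : 1 < x) (hxy : 2 * (x + x⁻¹) + 5 = y ^ n) :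
    x ∈ Set.Ioo ((y : ℝ) ^ n / 2 - 4) ((y : ℝ) ^ n / 2 - 2) := by
  have inv_pos : 0 < x⁻¹ := by positivity
  have inv_lt_one : x⁻¹ < 1 := inv_lt_one_of_one_lt₀ hx
  constructor <;> linarith

theorem pow_div_four_le (hn : n ≠ 0) (hy : 16 ≤ y) (hx : 1 < x)
    (hxy : 2 * (x + x⁻¹) + 5 = y ^ n) : (y : ℝ) ^ n / 4 ≤ x := by
  have hyn : (16 : ℝ) ≤ y ^ n := by exact_mod_cast hy.trans (Nat.le_self_pow hn y)
  have := (mem_Ioo_of_two_mul_add_inv hx hxy).1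
  linarith

theorem abs_sub_div_pow_le {R : ℝ} {k : ℕ} (hR : 0 < R) (hRn : R ^ n = 2) (hp : p ∣ n)
    (hk : k ∈ Ioo 0 p) (hn : n ≠ 0) (hy : 16 ≤ y) (hu : 0 ≤ u)
    (h : u ^ p ∈ Set.Icc (((y : ℝ) ^ n / 2 - 4) ^ k) (((y : ℝ) ^ n / 2) ^ k)) :
    |u - (y / R) ^ (k * (n / p))| ≤ 8 / y := by
  obtain ⟨hk0, hkp⟩ := mem_Ioo.1 hk
  have hR2 : R ≤ 2 :=
    le_of_pow_le_pow_left₀ hn two_pos.le (hRn.trans_le (le_self_pow₀ one_le_two hn))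
  set U := (y / R) ^ (k * (n / p)) with hU
  set s : ℝ := (y : ℝ) ^ n / 2 with hs
  have hy' : (16 : ℝ) ≤ y := by exact_mod_cast hy
  have hyn : (16 : ℝ) ≤ y ^ n := by exact_mod_cast hy.trans (Nat.le_self_pow hn y)
  have s_pos : 0 < s := by linarith
  have pow_eq_s : (y / R) ^ n = s := by rw [div_pow, hRn]
  have U_pow : U ^ p = s ^ k := by
    rw [hU, ← pow_mul, mul_assoc, Nat.div_mul_cancel hp, mul_comm, pow_mul, pow_eq_s]
  have hδ : 4 / s ∈ Set.Icc (0 : ℝ) 1 := ⟨by positivity, by rw [div_le_one s_pos]; linarith⟩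
  have U_le : U * (y / R) ≤ s := by
    have : k * (n / p) + 1 ≤ n := by
      calc k * (n / p) + 1 ≤ k * (n / p) + n / p := by
            gcongr; exact Nat.div_pos (Nat.le_of_dvd (by omega) hp) (by omega)
        _ = (k + 1) * (n / p) := by ring
        _ ≤ p * (n / p) := by gcongr; omega
        _ = n := Nat.mul_div_cancel' hp
    rw [hU, ← pow_succ, ← pow_eq_s]
    exact pow_le_pow_right₀ (by rw [one_le_div hR]; linarith) this
  calc |u - U| ≤ 4 / s * U := by
        refine abs_sub_le_mul_of_pow_mem_Icc (p := p) (k := k) (by omega) hkp.le hu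
          (by positivity) hδ ?_
        rwa [U_pow, ← mul_pow, sub_mul, div_mul_cancel₀ _ s_pos.ne', one_mul]
    _ ≤ 8 / y := by
      rw [div_mul_eq_mul_div, div_le_div_iff₀ s_pos (by positivity)]
      rw [← mul_div_assoc, div_le_iff₀ hR] at U_le
      nlinarith

theorem le_twelve_div (hp0 : p ≠ 0) (hpn : p ≤ n) (hy : 16 ≤ y) (hx : 1 < x)
    (hxy : 2 * (x + x⁻¹) + 5 = y ^ n) (h : v ^ p ≤ 3 * x⁻¹) : v ≤ 12 / y := by
  have hy' : (16 : ℝ) ≤ y := by exact_mod_cast hy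
  refine le_of_pow_le_pow_left₀ hp0 (by positivity) ?_
  calc v ^ p ≤ 3 * x⁻¹ := h
    _ ≤ 3 * ((y : ℝ) ^ n / 4)⁻¹ := by
      gcongr
      exact pow_div_four_le (by omega) hy hx hxy
    _ = 12 / (y : ℝ) ^ n := by field_simp; norm_num
    _ ≤ 12 ^ p / (y : ℝ) ^ p := by
      gcongr
      · exact le_self_pow₀ (by norm_num) hp0
      · linarith
    _ = (12 / y) ^ p := by rw [div_pow]

theorem not_hasIntegralTrace_of_pow_eq_one_add (hp : p ∣ n) (hp1 : 1 < p) (hn : n ≠ 0)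
    (hy : 16 < y) (hx : 1 < x) (hxy : 2 * (x + x⁻¹) + 5 = y ^ n) (hu0 : 0 < u) (hv0 : 0 < v)
    (hu : u ^ p = 1 + 2 * x⁻¹) (hv : v ^ p = 1 + 2 * x) : ¬ HasIntegralTrace u v := by
  have hp0 : p ≠ 0 := by omega
  have hx0 : 0 < x⁻¹ := by positivity
  have hu1 : 1 < u := by
    refine (one_lt_pow_iff_of_nonneg hu0.le hp0).1 ?_
    linarith
  have hv1 : 1 < v := by
    refine (one_lt_pow_iff_of_nonneg hv0.le hp0).1 ?_
    linarith
  have mul_eq : u * v = (y : ℝ) ^ (n / p) := by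
    refine (pow_left_inj₀ (by positivity) (by positivity) hp0).1 ?_
    rw [mul_pow, hu, hv, ← pow_mul, Nat.div_mul_cancel hp, ← hxy]
    field_simp
    ring
  refine not_hasIntegralTrace_of_mul_eq (w := (y : ℤ) ^ (n / p)) hu1 hv1 (by simpa using mul_eq) ?_
  have hy' : (16 : ℝ) < y := by exact_mod_cast hy
  have sub_one_le : (u - 1) * x ≤ 2 := by
    have := sub_le_pow_sub_pow hp0 le_rfl hu1.le
    rw [hu, one_pow, add_sub_cancel_left, ← div_eq_mul_inv, le_div_iff₀ (by positivity)] at this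
    exact this
  set w : ℝ := (y : ℝ) ^ (n / p)
  have le_w : (y : ℝ) ≤ w :=
    le_self_pow₀ (by linarith) (Nat.div_pos (Nat.le_of_dvd (by omega) hp) (by omega)).ne'
  have w_sq_le : w ^ 2 ≤ 4 * x := by
    have hexp : n / p * 2 ≤ n := (Nat.mul_le_mul_left _ hp1).trans (Nat.div_mul_le_self n p)
    have := pow_div_four_le hn hy.le hx hxy
    calc w ^ 2 = (y : ℝ) ^ (n / p * 2) := (pow_mul _ _ _).symm
      _ ≤ y ^ n := pow_le_pow_right₀ (by linarith) hexp
      _ ≤ 4 * x := by linarith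
  have four_mul_w_lt : 4 * w < x := by nlinarith
  have v_add_one_le : v + 1 ≤ 2 * w := by nlinarith
  refine lt_of_mul_lt_mul_right ?_ (zero_lt_one.trans hx).le
  calc (u - 1) * (v + 1) * x = (u - 1) * x * (v + 1) := by ring
    _ ≤ 2 * (2 * w) := by gcongr
    _ < 1 * x := by linarith

theorem IsRemoteFromIntegers.not_hasIntegralTrace_of_pow_eq_self {R : ℝ}
    (hfar : IsRemoteFromIntegers R n y) (hR : 0 < R) (hRn : R ^ n = 2) (hp : p ∣ n)
    (hp1 : 1 < p) (hn : n ≠ 0) (hy : 16 ≤ y) (hx : 1 < x) (hxy : 2 * (x + x⁻¹) + 5 = y ^ n)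
    (hu0 : 0 < u) (hv0 : 0 < v) (hu : u ^ p = x) (hv : v ^ p = x⁻¹) : ¬ HasIntegralTrace u v := by
  obtain ⟨x_gt, x_lt⟩ := mem_Ioo_of_two_mul_add_inv hx hxy
  have u_near := abs_sub_div_pow_le hR hRn hp (mem_Ioo.2 ⟨one_pos, hp1⟩) hn hy hu0.le
    (by rw [hu, pow_one, pow_one]; constructor <;> linarith)
  have v_le := le_twelve_div (by omega) (Nat.le_of_dvd (by omega) hp) hy hx hxy (v := v) (p := p)
    (by rw [hv]; linarith [inv_pos.2 (zero_lt_one.trans hx)])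
  rw [one_mul] at u_near
  refine hfar.not_hasIntegralTrace (m := n / p) (τ := 0)
    (mem_Ioo.2 ⟨Nat.div_pos (Nat.le_of_dvd (by omega) hp) (by omega),
      Nat.div_lt_self (by omega) hp1⟩) (Or.inl rfl) u_near ?_
  simpa [abs_of_pos hv0] using v_le

theorem IsRemoteFromIntegers.not_hasIntegralTrace_of_pow_eq_mul {R : ℝ} {j : ℕ}
    (hfar : IsRemoteFromIntegers R n y) (hR : 0 < R) (hRn : R ^ n = 2) (hp : p ∣ n)
    (hj : j + 1 < p) (hn : n ≠ 0) (hy : 16 ≤ y) (hx : 1 < x) (hxy : 2 * (x + x⁻¹) + 5 = y ^ n)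
    (hu0 : 0 < u) (hv0 : 0 < v) (hu : u ^ p = x ^ j * (2 + x))
    (hv : v ^ p = x⁻¹ ^ j * (2 + x⁻¹)) : ¬ HasIntegralTrace u v := by
  have hp0 : p ≠ 0 := by omega
  have quot_pos : 0 < n / p := Nat.div_pos (Nat.le_of_dvd (by omega) hp) (by omega)
  have hm : (j + 1) * (n / p) ∈ Ioo 0 n := by
    refine mem_Ioo.2 ⟨by positivity, ?_⟩
    calc (j + 1) * (n / p) < p * (n / p) := by gcongr
      _ = n := Nat.mul_div_cancel' hp
  obtain ⟨x_gt, x_lt⟩ := mem_Ioo_of_two_mul_add_inv hx hxy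
  have hyn : (16 : ℝ) ≤ y ^ n := by exact_mod_cast hy.trans (Nat.le_self_pow hn y)
  have hinv : 0 < x⁻¹ := by positivity
  have u_near := abs_sub_div_pow_le hR hRn hp (mem_Ioo.2 ⟨j.succ_pos, hj⟩) hn hy hu0.le (by
    rw [hu, Nat.succ_eq_add_one, pow_succ, pow_succ]
    constructor <;> gcongr <;> linarith)
  rcases j.eq_zero_or_pos with rfl | hj0
  · refine hfar.not_hasIntegralTrace hm (Or.inr rfl) u_near ?_
    have hRp : (R ^ (n / p)) ^ p = 2 := by rw [← pow_mul, Nat.div_mul_cancel hp, hRn]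
    rw [pow_zero, one_mul] at hv
    have one_le : 1 ≤ R ^ (n / p) :=
      (one_le_pow_iff_of_nonneg (pow_pos hR _).le hp0).1 (by linarith)
    have le_v : R ^ (n / p) ≤ v := le_of_pow_le_pow_left₀ hp0 hv0.le (by linarith)
    have sub_le := sub_le_pow_sub_pow hp0 one_le le_v
    have := le_twelve_div one_ne_zero (by omega) hy hx hxy (v := v - R ^ (n / p)) (by linarith)
    simpa [abs_of_nonneg (sub_nonneg.2 le_v)] using this
  · refine hfar.not_hasIntegralTrace hm (Or.inl rfl) u_near ?_
    have := le_twelve_div hp0 (Nat.le_of_dvd (by omega) hp) hy hx hxy (v := v) (p := p) ?_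
    · simpa [abs_of_pos hv0] using this
    calc v ^ p ≤ x⁻¹ * (2 + 1) := by
          rw [hv]
          gcongr
          · exact pow_le_of_le_one hinv.le (inv_le_one_of_one_le₀ hx.le) hj0.ne'
          · exact inv_le_one_of_one_le₀ hx.le
      _ = 3 * x⁻¹ := by ring

theorem exists_isFreeOfPowers (hn : 1 < n) :
    ∃ y : ℕ, 16 < y ∧ y % 6 = 1 ∧
      ∀ x : ℝ, 1 < x → 2 * (x + x⁻¹) + 5 = (y : ℝ) ^ n → IsFreeOfPowers n x := by
  obtain ⟨R, hR, hRn⟩ : ∃ R : ℝ, 0 < R ∧ R ^ n = 2 :=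
    ⟨2 ^ ((n : ℝ)⁻¹), by positivity, Real.rpow_inv_natCast_pow (by norm_num) (by omega)⟩
  have hn0 : n ≠ 0 := by omega
  obtain ⟨y, hy, hy6, hfar⟩ := exists_isRemoteFromIntegers hR hRn 17
  refine ⟨y, hy, hy6, fun x hx hxy p hp hp1 u v hu0 hv0 htr => ⟨?_, ?_⟩⟩
  · rintro ⟨hu, hv⟩
    exact hfar.not_hasIntegralTrace_of_pow_eq_self hR hRn hp hp1 hn0 (by omega) hx hxy hu0
      hv0 hu hv htr
  rintro i hi ⟨hu, hv⟩
  obtain ⟨hi1, hip⟩ := mem_Ico.1 hi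
  rcases hi1.eq_or_lt with rfl | hi0
  · refine not_hasIntegralTrace_of_pow_eq_one_add hp hp1 hn0 hy hx hxy hu0 hv0 ?_ ?_ htr
    · rw [hu, zpow_neg_one]; field_simp; ring
    · rw [hv, zpow_neg_one]; field_simp; ring
  · lift i to ℕ using by omega
    rw [zpow_natCast] at hu hv
    exact hfar.not_hasIntegralTrace_of_pow_eq_mul hR hRn hp (by omega) hn0 (by omega) hx hxy hu0 hv0
      hu hv htr

end Parameter

end IntegralTrace

section UnitRankOne

open Finset

theorem exists_mem_Ico_zpow_mul_eq_pow {G : Type*} [CommGroup G] [IsCyclic G] {p : ℕ}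
    (hp : p.Prime) {g : G} (hg : ¬ ∃ c, g = c ^ p) (h : G) (r : ℤ) :
    ∃ i ∈ Ico r (r + p), ∃ c, g ^ i * h = c ^ p := by
  obtain ⟨z, hz⟩ := IsCyclic.exists_generator (α := G)
  obtain ⟨a, rfl⟩ := hz g
  obtain ⟨b, rfl⟩ := hz h
  have coprime : IsCoprime (a : ℤ) p := by
    refine ((Nat.prime_iff_prime_int.1 hp).coprime_iff_not_dvd.2 ?_).symm
    rintro ⟨k, rfl⟩
    exact hg ⟨z ^ k, by rw [← zpow_natCast, ← zpow_mul, mul_comm k]⟩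
  obtain ⟨s, t, hst⟩ := coprime
  obtain ⟨m, hm, -⟩ := existsUnique_add_zsmul_mem_Ico (Int.natCast_pos.2 hp.pos) (-b * s) r
  rw [smul_eq_mul] at hm
  refine ⟨-b * s + m * p, mem_Ico.2 hm, z ^ (b * t + a * m), ?_⟩
  rw [← zpow_mul, ← zpow_add, ← zpow_natCast, ← zpow_mul]
  congr 1
  linear_combination -b * hst

variable {K : Type*} [Field K]

theorem abs_eq_of_mk_modTorsion_eq {u v : (𝓞 K)ˣ}
    (huv : (u : (𝓞 K)ˣ ⧸ Units.torsion K) = v) (σ : K →+* ℝ) :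
    |σ (u : K)| = |σ (v : K)| := by
  obtain ⟨ζ, hζ, rfl⟩ : ∃ ζ ∈ Units.torsion K, u * ζ = v :=
    ⟨u⁻¹ * v, QuotientGroup.eq.1 huv, mul_inv_cancel_left u v⟩
  obtain ⟨k, hk, hζk⟩ := isOfFinOrder_iff_pow_eq_one.1 ((CommGroup.mem_torsion ζ).1 hζ)
  have pow_eq_one : σ (ζ : K) ^ k = 1 := by
    rw [← map_pow, ← Units.coe_pow, hζk, Units.coe_one, map_one]
  have : |σ (ζ : K)| = 1 := (isOfFinOrder_iff_pow_eq_one.2 ⟨k, hk, pow_eq_one⟩).norm_eq_one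
  rw [Units.coe_mul, map_mul, abs_mul, this, mul_one]

variable [NumberField K]

theorem isCyclic_units_modTorsion (hrank : Units.rank K = 1) :
    IsCyclic ((𝓞 K)ˣ ⧸ Units.torsion K) := by
  have : Unique (Fin (Units.rank K)) := by rw [hrank]; infer_instance
  refine ⟨(Units.fundSystem K default : (𝓞 K)ˣ ⧸ Units.torsion K), ?_⟩
  rintro ⟨u⟩
  obtain ⟨⟨ζ, a⟩, rfl, -⟩ := Units.exist_unique_eq_mul_prod K u
  refine ⟨a default, (QuotientGroup.eq_iff_div_mem.2 ?_).symm⟩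
  simpa only [Fintype.prod_unique, mul_div_cancel_right] using ζ.2

theorem exists_abs_map_eq_pow (hrank : Units.rank K = 1) {p : ℕ} (hp : p.Prime) (η : (𝓞 K)ˣ) :
    (∃ c : (𝓞 K)ˣ, ∀ σ : K →+* ℝ, |σ (η : K)| = |σ (c : K)| ^ p) ∨
    ∀ (ε : (𝓞 K)ˣ) (r : ℤ), ∃ i ∈ Ico r (r + p), ∃ c : (𝓞 K)ˣ, ∀ σ : K →+* ℝ,
      |σ (η : K)| ^ i * |σ (ε : K)| = |σ (c : K)| ^ p := by
  have := isCyclic_units_modTorsion hrank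
  by_cases hη : ∃ c : (𝓞 K)ˣ ⧸ Units.torsion K, η = c ^ p
  · obtain ⟨⟨c⟩, hc⟩ := hη
    refine Or.inl ⟨c, fun σ => ?_⟩
    rw [abs_eq_of_mk_modTorsion_eq (v := c ^ p) hc, Units.coe_pow, map_pow, abs_pow]
  · refine Or.inr fun ε r => ?_
    obtain ⟨i, hi, ⟨c⟩, hc⟩ :=
      exists_mem_Ico_zpow_mul_eq_pow hp hη (ε : (𝓞 K)ˣ ⧸ Units.torsion K) r
    refine ⟨i, hi, c, fun σ => ?_⟩
    rw [← abs_pow, ← map_pow, ← Units.coe_pow,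
      ← abs_eq_of_mk_modTorsion_eq (u := η ^ i * ε) (v := c ^ p) hc, Units.coe_mul, Units.coe_zpow,
      map_mul, map_zpow₀, abs_mul, abs_zpow]

end UnitRankOne

section Dedekind

variable {R : Type*} [CommRing R]

theorem isCoprime_two_add_unit (η : Rˣ) {y n : ℕ} (hy : ¬ 3 ∣ y)
    (hmul : (2 + (η : R)) * (2 + ↑η⁻¹) = y ^ n) : IsCoprime (2 + (η : R)) (2 + ↑η⁻¹) := by
  have three_coprime : IsCoprime (3 : ℤ) (y ^ n) := by
    refine IsCoprime.pow_right ?_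
    exact_mod_cast Nat.isCoprime_iff_coprime.2 ((Nat.prime_three.coprime_iff_not_dvd).2 hy)
  obtain ⟨s, t, hst⟩ := three_coprime.map (Int.castRingHom R)
  refine ⟨- s * ↑η⁻¹ + t * (2 + ↑η⁻¹), s * 2, ?_⟩
  simp only [map_ofNat, map_pow, map_natCast] at hst
  linear_combination hst - s * η.mul_inv + t * hmul

theorem exists_span_two_add_unit_eq_pow [IsDedekindDomain R] (η : Rˣ) {y n : ℕ} (hy : ¬ 3 ∣ y)
    (hmul : (2 + (η : R)) * (2 + ↑η⁻¹) = y ^ n) :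
    ∃ d : Ideal R, Ideal.span {2 + (η : R)} = d ^ n := by
  let _ : GCDMonoid (Ideal R) := UniqueFactorizationMonoid.toGCDMonoid _
  refine exists_eq_pow_of_mul_eq_pow_of_coprime (b := Ideal.span {2 + (↑η⁻¹ : R)})
    (c := Ideal.span {(y : R)}) ?_ ?_
  · exact (Ideal.isCoprime_span_singleton_iff _ _).2 (isCoprime_two_add_unit η hy hmul)
  · rw [Ideal.span_singleton_mul_span_singleton, Ideal.span_singleton_pow, hmul]

theorem orderOf_mk0_eq [IsDedekindDomain R] {n : ℕ} (hn : 0 < n)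
    {d : nonZeroDivisors (Ideal R)} (hd : (d ^ n : Ideal R).IsPrincipal)
    (hdp : ∀ p : ℕ, p.Prime → p ∣ n → ¬ (d ^ (n / p) : Ideal R).IsPrincipal) :
    orderOf (ClassGroup.mk0 d) = n := by
  refine orderOf_eq_of_pow_and_pow_div_prime hn ?_ fun p hp hpn => ?_
  · rw [← map_pow, ClassGroup.mk0_eq_one_iff]
    exact hd
  · rw [← map_pow, Ne, ClassGroup.mk0_eq_one_iff]
    exact hdp p hp hpn

theorem exists_eq_unit_mul_pow [IsDomain R] {a : R} {I : Ideal R} {p : ℕ}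
    (ha : Ideal.span {a} = I ^ p) (hI : I.IsPrincipal) : ∃ (β : R) (ε : Rˣ), a = ε * β ^ p := by
  obtain ⟨β, rfl⟩ := hI
  have span_eq : Ideal.span {β ^ p} = Ideal.span {a} := by
    rw [ha, ← Ideal.span_singleton_pow, Ideal.submodule_span_eq]
  obtain ⟨ε, hε⟩ := Ideal.span_singleton_eq_span_singleton.1 span_eq
  exact ⟨β, ε, by rw [← hε, mul_comm]⟩

end Dedekind

section RealQuadratic

open Finset

variable {K : Type*} [Field K]

theorem TotallyReal.isTotallyReal (h : TotallyReal K) : IsTotallyReal K where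
  isReal w := by
    rw [InfinitePlace.isReal_iff, ComplexEmbedding.isReal_iff]
    exact RingHom.ext fun z => Complex.conj_eq_iff_im.2 (h _ z)

variable {σ σ' : K →+* ℝ}

theorem ofRealHom_comp_ne (hσ : σ ≠ σ') :
    Complex.ofRealHom.comp σ ≠ Complex.ofRealHom.comp σ' := fun h =>
  hσ (RingHom.ext fun z => Complex.ofReal_injective (RingHom.congr_fun h z))

variable [NumberField K]

open Classical in
theorem univ_complexEmbeddings_eq (hK : Module.finrank ℚ K = 2) (hσ : σ ≠ σ') :
    (univ : Finset (K →+* ℂ)) = {Complex.ofRealHom.comp σ, Complex.ofRealHom.comp σ'} := by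
  refine (eq_univ_of_card _ ?_).symm
  rw [card_pair (ofRealHom_comp_ne hσ), Embeddings.card, hK]

theorem totallyReal_of_finrank_eq_two (hK : Module.finrank ℚ K = 2) (hσ : σ ≠ σ') :
    TotallyReal K := by
  classical
  intro φ z
  have hφ := mem_univ φ
  rw [univ_complexEmbeddings_eq hK hσ, mem_insert, mem_singleton] at hφ
  rcases hφ with rfl | rfl <;> exact Complex.ofReal_im _

theorem units_rank_of_finrank_eq_two (hK : Module.finrank ℚ K = 2) (hσ : σ ≠ σ') :
    Units.rank K = 1 := by
  have := (totallyReal_of_finrank_eq_two hK hσ).isTotallyReal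
  rw [Units.rank, InfinitePlace.card_eq_nrRealPlaces_add_nrComplexPlaces,
    IsTotallyReal.nrComplexPlaces_eq_zero K, ← IsTotallyReal.finrank K, hK]

theorem add_eq_trace_of_finrank_eq_two (hK : Module.finrank ℚ K = 2) (hσ : σ ≠ σ') (z : K) :
    σ z + σ' z = Algebra.trace ℚ K z := by
  classical
  have sum_eq : ∑ φ : K →+* ℂ, φ z = (Algebra.trace ℚ K z : ℂ) := by
    rw [← eq_ratCast (algebraMap ℚ ℂ), trace_eq_sum_embeddings ℂ]
    exact Fintype.sum_equiv (RingHom.equivRatAlgHom K ℂ) _ _ fun _ => rfl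
  rw [univ_complexEmbeddings_eq hK hσ, sum_pair (ofRealHom_comp_ne hσ)] at sum_eq
  exact Complex.ofReal_injective (by push_cast; exact sum_eq)

theorem hasIntegralTrace_abs (hK : Module.finrank ℚ K = 2) (hσ : σ ≠ σ') (γ : 𝓞 K) :
    HasIntegralTrace |σ γ| |σ' γ| := by
  have trace_eq : σ γ + σ' γ = (Algebra.trace ℤ (𝓞 K) γ : ℤ) := by
    rw [add_eq_trace_of_finrank_eq_two hK hσ, ← Algebra.coe_trace_int]
    norm_cast
  set T := Algebra.trace ℤ (𝓞 K) γ
  rcases abs_choice (σ γ) with h | h <;> rcases abs_choice (σ' γ) with h' | h' <;> rw [h, h']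
  · exact ⟨T, Or.inl trace_eq⟩
  · exact ⟨T, Or.inr (by linarith)⟩
  · exact ⟨-T, Or.inr (by push_cast; linarith)⟩
  · exact ⟨-T, Or.inl (by push_cast; linarith)⟩

theorem not_two_add_unit_eq_unit_mul_pow (hK : Module.finrank ℚ K = 2) (hσ : σ ≠ σ') {n : ℕ}
    {x : ℝ} (hx : 0 < x) (hfree : IsFreeOfPowers n x) {η : (𝓞 K)ˣ} (hση : σ η = x)
    (hση' : σ' η = x⁻¹) {p : ℕ} (hp : p.Prime) (hpn : p ∣ n) (ε : (𝓞 K)ˣ) (β : 𝓞 K) :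
    2 + (η : 𝓞 K) ≠ ε * β ^ p := by
  intro heq
  have two_add_eq (τ : K →+* ℝ) (hτ : 0 < τ η) : 2 + τ η = |τ ε| * |τ β| ^ p := by
    have := congrArg (fun z : 𝓞 K => τ z) heq
    simp only [map_add, map_mul, map_pow, map_ofNat] at this
    rw [← abs_pow, ← abs_mul, ← this, abs_of_pos (by linarith)]
  have excluded {γ : 𝓞 K} (hγ : γ ≠ 0) :=
    hfree p hpn hp.one_lt |σ γ| |σ' γ| (abs_pos.2 (by simpa using hγ))
      (abs_pos.2 (by simpa using hγ)) (hasIntegralTrace_abs hK hσ γ)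
  rcases exists_abs_map_eq_pow (units_rank_of_finrank_eq_two hK hσ) hp η with ⟨c, hc⟩ | h
  · refine (excluded c.ne_zero).1 ⟨?_, ?_⟩
    · rw [← hc, hση, abs_of_pos hx]
    · rw [← hc, hση', abs_of_pos (inv_pos.2 hx)]
  · obtain ⟨i, hi, c, hc⟩ := h ε (-1)
    rw [neg_add_eq_sub] at hi
    have hβ : β ≠ 0 := by
      rintro rfl
      have := two_add_eq σ (hση ▸ hx)
      rw [hση, RingOfIntegers.coe_eq_algebraMap 0, map_zero, map_zero, abs_zero,
        zero_pow hp.ne_zero, mul_zero] at this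
      linarith
    have pow_eq (τ : K →+* ℝ) (hτ : 0 < τ η) :
        |τ (c * β : 𝓞 K)| ^ p = τ η ^ i * (2 + τ η) := by
      rw [two_add_eq τ hτ, ← mul_assoc, RingOfIntegers.coe_eq_algebraMap ((c : 𝓞 K) * β), map_mul,
        map_mul, abs_mul, mul_pow, ← hc, abs_of_pos hτ]
    refine (excluded (mul_ne_zero c.ne_zero hβ)).2 i hi ⟨?_, ?_⟩
    · rw [pow_eq σ (hση ▸ hx), hση]
    · rw [pow_eq σ' (hση' ▸ inv_pos.2 hx), hση']

theorem exists_orderOf_eq (hK : Module.finrank ℚ K = 2) (hσ : σ ≠ σ') {n y : ℕ} (hn : 0 < n)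
    (hy : ¬ 3 ∣ y) {x : ℝ} (hx : 0 < x) (hxy : 2 * (x + x⁻¹) + 5 = (y : ℝ) ^ n)
    (hfree : IsFreeOfPowers n x) {η : (𝓞 K)ˣ} (hση : σ η = x) (hση' : σ' η = x⁻¹) :
    ∃ c : ClassGroup (𝓞 K), orderOf c = n := by
  have hmul : (2 + (η : 𝓞 K)) * (2 + ↑η⁻¹) = y ^ n := by
    refine (σ.injective.comp RingOfIntegers.coe_injective) ?_
    have map_inv : σ (↑η⁻¹ : 𝓞 K) = x⁻¹ := by
      rw [← hση]
      exact map_units_inv (σ.comp (algebraMap (𝓞 K) K)) η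
    simp only [Function.comp_apply, map_add, map_mul, map_pow, map_ofNat, map_natCast, hση,
      map_inv, ← hxy]
    field_simp
    ring
  obtain ⟨d, hd⟩ := exists_span_two_add_unit_eq_pow η hy hmul
  have hd0 : d ≠ ⊥ := by
    rintro rfl
    rw [← Ideal.zero_eq_bot, zero_pow hn.ne', Ideal.zero_eq_bot,
      Ideal.span_singleton_eq_bot] at hd
    have := congrArg (fun z : 𝓞 K => σ z) hd
    simp only [map_add, map_ofNat, map_zero, hση] at this
    linarith
  refine ⟨ClassGroup.mk0 ⟨d, mem_nonZeroDivisors_of_ne_zero hd0⟩, orderOf_mk0_eq hn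
    ⟨2 + η, hd.symm⟩ fun p hp hpn hprincipal => ?_⟩
  rw [← Nat.div_mul_cancel hpn, pow_mul] at hd
  obtain ⟨β, ε, heq⟩ := exists_eq_unit_mul_pow hd hprincipal
  exact not_two_add_unit_eq_unit_mul_pow hK hσ hx hfree hση hση' hp hpn ε β heq

end RealQuadratic

section SplittingField

variable {F E : Type*} [Field F] [Field E] [Algebra F E] {f : F[X]} {u : E}

open IntermediateField

theorem isSplittingField_adjoin_root_of_natDegree_eq_two (hf : f.natDegree = 2)
    (hu : aeval u f = 0) : f.IsSplittingField F F⟮u⟯ := by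
  have hf0 : f ≠ 0 := ne_zero_of_natDegree_gt (n := 0) (by omega)
  have splits : (f.map (algebraMap F F⟮u⟯)).Splits := by
    refine Splits.of_natDegree_eq_two (by rwa [natDegree_map]) (x := AdjoinSimple.gen F u) ?_
    rw [eval_map_algebraMap, ← FaithfulSMul.algebraMap_eq_zero_iff F⟮u⟯ E, ← aeval_algebraMap_apply,
      AdjoinSimple.algebraMap_gen, hu]
  have splits' : (f.map (algebraMap F E)).Splits := splits.of_isScalarTower E
  refine isSplittingField_iff.2 ⟨splits, le_antisymm ?_ ?_⟩
  · exact adjoin.mono _ _ _ (Set.singleton_subset_iff.2 (mem_rootSet.2 ⟨hf0, hu⟩))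
  · exact adjoin_le_iff.2 ((splits_iff_mem splits').1 splits)

theorem finrank_adjoin_root (hf : Irreducible f) (hu : aeval u f = 0) :
    Module.finrank F F⟮u⟯ = f.natDegree := by
  have integral : IsIntegral F u := IsAlgebraic.isIntegral ⟨f, hf.ne_zero, hu⟩
  rw [adjoin.finrank integral, ← minpoly.eq_of_irreducible hf hu,
    natDegree_mul_C (inv_ne_zero (leadingCoeff_ne_zero.2 hf.ne_zero))]

theorem exists_algHom_adjoin_root {L : Type*} [Field L] [Algebra F L] {z : L}
    (hf : Irreducible f) (hu : aeval u f = 0) (hz : aeval z f = 0) :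
    ∃ σ : F⟮u⟯ →ₐ[F] L, σ (AdjoinSimple.gen F u) = z := by
  have integral : IsIntegral F u := IsAlgebraic.isIntegral ⟨f, hf.ne_zero, hu⟩
  have root : z ∈ (minpoly F u).aroots L := by
    refine mem_aroots.2 ⟨minpoly.ne_zero integral, ?_⟩
    rw [hf.dvd_iff_aeval_eq_zero hz, ← hf.dvd_iff_aeval_eq_zero hu, minpoly.aeval]
  exact ⟨_, algHomAdjoinIntegralEquiv_symm_apply_gen F integral ⟨z, root⟩⟩

theorem eq_of_algEquiv_of_normal {K K' : IntermediateField F E} (hK : Normal F K)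
    (e : K ≃ₐ[F] K') : K = K' := by
  rw [← AlgHom.fieldRange_of_normal (E := K) (K'.val.comp e), ← AlgHom.map_fieldRange,
    AlgEquiv.fieldRange_eq_top, ← AlgHom.fieldRange_eq_map, fieldRange_val]

end SplittingField

section Unit

theorem irreducible_X_sq_add_C_mul_X_add_one {a : ℤ} (ha : |a| ≠ 2) :
    Irreducible (X ^ 2 + C (a : ℚ) * X + 1 : ℚ[X]) := by
  have hdeg : (X ^ 2 + C (a : ℚ) * X + 1 : ℚ[X]).natDegree = 2 := by compute_degree!
  rw [irreducible_iff_roots_eq_zero_of_degree_le_three hdeg.ge (by omega),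
    Multiset.eq_zero_iff_forall_notMem]
  intro r hr
  have root : r ^ 2 + a * r + 1 = 0 := by simpa using (mem_roots'.1 hr).2
  have integral : IsIntegral ℤ r :=
    ⟨X ^ 2 + C a * X + 1, by monicity!, by simpa [-eq_intCast] using root⟩
  obtain ⟨m, rfl⟩ := IsIntegrallyClosed.isIntegral_iff.1 integral
  rw [eq_intCast] at root
  norm_cast at root
  rcases Int.eq_one_or_neg_one_of_mul_eq_one (u := m) (v := -(m + a))
    (by linear_combination -root) with rfl | rfl
  · exact ha ((abs_eq two_pos.le).2 (by omega))
  · exact ha ((abs_eq two_pos.le).2 (by omega))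

theorem exists_unit_eq_of_sq_add_mul_add_one {K : Type*} [Field K] {θ : K} {a : ℤ}
    (hθ : θ ^ 2 + a * θ + 1 = 0) : ∃ η : (𝓞 K)ˣ, (η : K) = θ := by
  have integral : IsIntegral ℤ θ :=
    ⟨X ^ 2 + C a * X + 1, by monicity!, by simpa [-eq_intCast] using hθ⟩
  obtain ⟨t, rfl⟩ : ∃ t : 𝓞 K, (t : K) = θ := ⟨⟨θ, integral⟩, rfl⟩
  have mul_eq_one : t * (-t - a) = 1 := by
    refine RingOfIntegers.coe_injective ?_
    simp only [map_mul, map_sub, map_neg, map_intCast, map_one]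
    linear_combination -hθ
  exact ⟨Units.mkOfMulEqOne _ _ mul_eq_one, rfl⟩

end Unit

theorem hasZModRankGE_one_iff {M : Type*} [CommGroup M] {n : ℕ} :
    HasZModRankGE M n 1 ↔ ∃ c : M, orderOf c = n := by
  let e : Multiplicative (Fin 1 → ZMod n) ≃* Multiplicative (ZMod n) :=
    (AddEquiv.funUnique (Fin 1) (ZMod n)).toMultiplicative
  constructor
  · rintro ⟨φ, hφ⟩
    refine ⟨φ (e.symm (.ofAdd 1)), ?_⟩
    rw [orderOf_injective φ hφ, MulEquiv.orderOf_eq, orderOf_ofAdd_eq_addOrderOf,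
      ZMod.addOrderOf_one]
  · rintro ⟨c, hc⟩
    rw [← Nat.card_zpowers] at hc
    subst hc
    let φ := e.trans (zmodCyclicMulEquiv (G := Subgroup.zpowers c) inferInstance)
    exact ⟨(Subgroup.zpowers c).subtype.comp φ, Subtype.val_injective.comp φ.injective⟩

section LargeClassGroupFields

open IntermediateField

theorem aeval_neg_eq_zero_of_add_inv_eq {L : Type*} [Field L] [Algebra ℚ L] {u : L}
    (hu : u ≠ 0) {a : ℤ} (ha : u + u⁻¹ = a) :
    aeval (-u) (X ^ 2 + C (a : ℚ) * X + 1 : ℚ[X]) = 0 := by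
  simp only [map_add, map_mul, map_pow, aeval_X, map_intCast, map_one, ← ha]
  field_simp
  ring

section

variable {x : ℝ} {a : ℤ}

theorem aeval_neg_ofReal_eq_zero (hx : x ≠ 0) (ha : x + x⁻¹ = a) :
    aeval (-(x : ℂ)) (X ^ 2 + C (a : ℚ) * X + 1 : ℚ[X]) = 0 :=
  aeval_neg_eq_zero_of_add_inv_eq (by exact_mod_cast hx)
    (by exact_mod_cast congrArg Complex.ofReal ha)

theorem irreducible_of_add_inv_eq (hx : 1 < x) (ha : x + x⁻¹ = a) :
    Irreducible (X ^ 2 + C (a : ℚ) * X + 1 : ℚ[X]) := by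
  have hx0 : 0 < x := zero_lt_one.trans hx
  have two_lt : (2 : ℝ) < a := by
    rw [← ha]
    nlinarith [mul_inv_cancel₀ hx0.ne', inv_lt_one_of_one_lt₀ hx]
  norm_cast at two_lt
  exact irreducible_X_sq_add_C_mul_X_add_one (two_lt.trans_le (le_abs_self a)).ne'

theorem exists_real_embeddings_and_unit (hx : 1 < x) (ha : x + x⁻¹ = a) :
    ∃ (σ σ' : ℚ⟮-(x : ℂ)⟯ →+* ℝ) (η : (𝓞 ℚ⟮-(x : ℂ)⟯)ˣ), σ η = x ∧ σ' η = x⁻¹ := by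
  have hx0 : x ≠ 0 := (zero_lt_one.trans hx).ne'
  have irreducible := irreducible_of_add_inv_eq hx ha
  have root := aeval_neg_ofReal_eq_zero hx0 ha
  obtain ⟨σ, hσ⟩ := exists_algHom_adjoin_root irreducible root
    (aeval_neg_eq_zero_of_add_inv_eq hx0 ha)
  obtain ⟨σ', hσ'⟩ := exists_algHom_adjoin_root irreducible root
    (aeval_neg_eq_zero_of_add_inv_eq (u := x⁻¹) (inv_ne_zero hx0) (by rw [inv_inv, add_comm, ha]))
  obtain ⟨θ, hθ⟩ := exists_unit_eq_of_sq_add_mul_add_one (a := a)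
    (θ := AdjoinSimple.gen ℚ (-(x : ℂ))) (Subtype.val_injective (by simpa using root))
  refine ⟨σ, σ', -θ, ?_, ?_⟩
  · simp [hθ, hσ]
  · simp [hθ, hσ']

end

/-- The real quadratic subfields of `ℂ` that split some irreducible `x² + ((yⁿ - 5)/2)x + 1` with
`y` odd and `3 ∤ y`, and whose class group has `n`-rank at least one. -/
def largeClassGroupFields (n : ℕ) : Set (IntermediateField ℚ ℂ) :=
  {K | ∃ y : ℕ, 0 < y ∧ Odd y ∧ ¬ (3 ∣ y) ∧
    (let P : Polynomial ℚ := X ^ 2 + C (((y : ℚ) ^ n - 5) / 2) * X + 1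
     Irreducible P ∧ P.IsSplittingField ℚ K) ∧
    NumberField K ∧ Module.finrank ℚ K = 2 ∧ TotallyReal K ∧
    HasZModRankGE (ClassGroup (𝓞 K)) n 1}

variable {n : ℕ} {K K' : IntermediateField ℚ ℂ}

theorem mem_largeClassGroupFields (hn : 0 < n) {y : ℕ} (hodd : Odd y) (h3 : ¬ 3 ∣ y)
    {a : ℤ} (ha : 2 * (a : ℝ) + 5 = (y : ℝ) ^ n) {x : ℝ} (hx : 1 < x) (hxa : x + x⁻¹ = a)
    (hfree : IsFreeOfPowers n x) : ℚ⟮-(x : ℂ)⟯ ∈ largeClassGroupFields n := by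
  have coeff_eq : ((y : ℚ) ^ n - 5) / 2 = a := by
    have : 2 * (a : ℚ) + 5 = (y : ℚ) ^ n := by exact_mod_cast ha
    linarith
  have irreducible := irreducible_of_add_inv_eq hx hxa
  have natDegree : (X ^ 2 + C (a : ℚ) * X + 1 : ℚ[X]).natDegree = 2 := by compute_degree!
  have root := aeval_neg_ofReal_eq_zero (zero_lt_one.trans hx).ne' hxa
  have finrank : Module.finrank ℚ ℚ⟮-(x : ℂ)⟯ = 2 :=
    (finrank_adjoin_root irreducible root).trans natDegree
  have numberField : NumberField ℚ⟮-(x : ℂ)⟯ :=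
    { to_finiteDimensional := Module.finite_of_finrank_pos (finrank ▸ two_pos) }
  obtain ⟨σ, σ', η, hση, hση'⟩ := exists_real_embeddings_and_unit hx hxa
  have hσ : σ ≠ σ' := by
    rintro rfl
    exact ((inv_lt_one_of_one_lt₀ hx).trans hx).ne (hση'.symm.trans hση)
  refine ⟨y, hodd.pos, hodd, h3, ?_, numberField, finrank,
    totallyReal_of_finrank_eq_two finrank hσ, hasZModRankGE_one_iff.2 ?_⟩
  · rw [coeff_eq]
    exact ⟨irreducible, isSplittingField_adjoin_root_of_natDegree_eq_two natDegree root⟩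
  · exact exists_orderOf_eq finrank hσ hn h3 (zero_lt_one.trans hx) (hxa ▸ ha) hfree hση hση'

theorem exists_one_lt_add_inv_eq {a : ℝ} (ha : 2 < a) : ∃ x : ℝ, 1 < x ∧ x + x⁻¹ = a := by
  have sq_sqrt := Real.sq_sqrt (show 0 ≤ a ^ 2 - 4 by nlinarith)
  have hx : 1 < (a + √(a ^ 2 - 4)) / 2 := by linarith [Real.sqrt_nonneg (a ^ 2 - 4)]
  refine ⟨_, hx, ?_⟩
  rw [← eq_sub_iff_add_eq']
  refine inv_eq_of_mul_eq_one_right ?_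
  linear_combination -sq_sqrt / 4

theorem largeClassGroupFields_nonempty (hn : 1 < n) : (largeClassGroupFields n).Nonempty := by
  obtain ⟨y, hy, hmod, hfree⟩ := exists_isFreeOfPowers hn
  have hodd : Odd y := Nat.odd_iff.2 (by omega)
  obtain ⟨m, hm⟩ := hodd.pow (n := n)
  have hle := Nat.le_self_pow (by omega : n ≠ 0) y
  obtain ⟨a, ha, ha2⟩ : ∃ a : ℤ, 2 * a + 5 = (y ^ n : ℕ) ∧ 2 < a := ⟨m - 2, by omega, by omega⟩
  obtain ⟨x, hx, hxa⟩ := exists_one_lt_add_inv_eq (a := a) (by exact_mod_cast ha2)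
  have ha' : 2 * (a : ℝ) + 5 = (y : ℝ) ^ n := by exact_mod_cast ha
  exact ⟨_, mem_largeClassGroupFields (by omega) hodd (by omega) ha' hx hxa
    (hfree x hx (hxa ▸ ha'))⟩

theorem largeClassGroupFields_mul_subset {k : ℕ} (hk : k ≠ 0) :
    largeClassGroupFields (k * n) ⊆ largeClassGroupFields n := by
  rintro K ⟨y, hy, hodd, h3, hP, hK, hdeg, hreal, hrank⟩
  obtain ⟨c, hc⟩ := hasZModRankGE_one_iff.1 hrank
  refine ⟨y ^ k, pow_pos hy k, hodd.pow, mt Nat.prime_three.dvd_of_dvd_pow h3, ?_, hK, hdeg,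
    hreal, hasZModRankGE_one_iff.2 ⟨c ^ k, ?_⟩⟩
  · rwa [Nat.cast_pow, ← pow_mul]
  · rw [orderOf_pow_of_dvd hk (hc ▸ Nat.dvd_mul_right k n), hc,
      Nat.mul_div_cancel_left n (by omega)]

theorem le_card_classGroup_of_mem_largeClassGroupFields (hK : K ∈ largeClassGroupFields n) :
    n ≤ Nat.card (ClassGroup (𝓞 K)) := by
  obtain ⟨-, -, -, -, -, hK, -, -, hrank⟩ := hK
  obtain ⟨c, rfl⟩ := hasZModRankGE_one_iff.1 hrank
  exact orderOf_le_card

theorem infinite_largeClassGroupFields (hn : 1 < n) : (largeClassGroupFields n).Infinite := by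
  intro hfin
  obtain ⟨B, hB⟩ :=
    (hfin.image fun K : IntermediateField ℚ ℂ => Nat.card (ClassGroup (𝓞 K))).bddAbove
  have hlt : B < (B + 1) * n := by nlinarith
  obtain ⟨K, hK⟩ := largeClassGroupFields_nonempty (n := (B + 1) * n) (by nlinarith)
  have hKB : Nat.card (ClassGroup (𝓞 K)) ≤ B :=
    hB (Set.mem_image_of_mem _ (largeClassGroupFields_mul_subset B.succ_ne_zero hK))
  exact absurd ((le_card_classGroup_of_mem_largeClassGroupFields hK).trans hKB) hlt.not_ge

theorem isEmpty_ringEquiv_of_mem_largeClassGroupFields (hK : K ∈ largeClassGroupFields n)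
    (hne : K ≠ K') : IsEmpty (K ≃+* K') := by
  obtain ⟨y, -, -, -, ⟨-, hP⟩, -⟩ := hK
  have normal : Normal ℚ K := .of_isSplittingField _ (hFEp := hP)
  exact ⟨fun e => hne (eq_of_algEquiv_of_normal normal e.toRatAlgEquiv)⟩

end LargeClassGroupFields

/-- **Real quadratic fields with large class group (`G = ℤ/2ℤ`).**
For every integer `n > 1` there are infinitely many pairwise non-isomorphic real quadratic
fields `K`, each a splitting field of an irreducible polynomial
`x² + ((yⁿ - 5)/2)x + 1` with `y` a positive integer with `y` odd and `3 ∤ y`,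
such that `rank_n Cl(K) ≥ 1`. -/
theorem real_quadratic_large_class_group (n : ℕ) (hn : 1 < n) :
    ∃ S : Set (IntermediateField ℚ ℂ), S.Infinite ∧
      (∀ K ∈ S, ∀ K' ∈ S, K ≠ K' → IsEmpty (K ≃+* K')) ∧
      ∀ K ∈ S, ∃ y : ℕ, 0 < y ∧ Odd y ∧ ¬ (3 ∣ y) ∧
        (let P : Polynomial ℚ := X ^ 2 + C (((y : ℚ) ^ n - 5) / 2) * X + 1
         Irreducible P ∧ P.IsSplittingField ℚ K) ∧
        NumberField K ∧ Module.finrank ℚ K = 2 ∧ TotallyReal K ∧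
        HasZModRankGE (ClassGroup (𝓞 K)) n 1 :=
  ⟨largeClassGroupFields n, infinite_largeClassGroupFields hn,
    fun _ hK _ _ hne => isEmpty_ringEquiv_of_mem_largeClassGroupFields hK hne, fun _ hK => hK⟩
end
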